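/- arXiv:2412.00389 — 3 statements merged into one kernel-verified Lean document; each statement's English description precedes it below -/
import Mathlib

section
/- Let N, M be positive integers, a_1, ..., a_N positive integers with a_n ≤ M for all n, and for d ∈ ℕ set ω(d) = #{n ≤ N : d divides a_n}. Let α ∈ (0,1], y = max((ln M)^α, 2), and let 𝒟 be the collection of squarefree positive integers all of whose prime divisors lie in (1, y]. Suppose γ > 0, c_0 > 0, g is a multiplicative arithmetic function with g(p) ≥ c_0 for every prime p, L := Σ_p 1/(p·g(p)) < ∞ (sum over all primes), and ω(n) ≤ γN/g(n) for every n ∈ 𝒟. Then there exists a constant C > 0 depending only on γ, L, c_0, and α such that for every s ∈ ℕ, Σ_{n=1}^{N} (a_n/φ(a_n))^s ≤ exp(s·log log(s+2) + C·s) · N. -/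
/-!
The identity `a / φ(a) = ∏ p ∣ a, (1 - 1 / p)⁻¹` gives `a / φ(a) ≤ exp (2 + ∑ p ∣ a, 1 / p)`, and
the primes dividing `a` are split according to size. By Mertens' estimate, the primes `p ≤ s`
contribute `log log s + O(1)` to the sum, and the primes in `(y, log M]` contribute `O(1)` since
`log log M - log log y` is at most `log (1 / α)`; the primes above `log M` contribute `O(1)` because
`a` has `O(log M)` prime factors.

The primes in `(s, y]` are treated on average. For them `exp (s / p) ≤ 1 + 2 s / p`, and expanding
the product of these factors over the `p ∣ a n` turns the sum over `n` into a sum over squarefree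
`d` of the counts of `n` with `d ∣ a n`. The hypothesis on these counts reassembles that sum into
`∏ p, (1 + 2 s / (p g(p))) ≤ exp (2 s L)`.
-/

open Finset Real

/-- The primes in the half-open interval `(m, n]`, used to split prime sums by size. -/
def primesIoc (m n : ℕ) : Finset ℕ := {p ∈ Ioc m n | p.Prime}

lemma mem_primesIoc {m n p : ℕ} : p ∈ primesIoc m n ↔ (m < p ∧ p ≤ n) ∧ p.Prime := by
  simp only [primesIoc, mem_filter, mem_Ioc]

lemma prime_of_mem_primesIoc {m n p : ℕ} (hp : p ∈ primesIoc m n) : p.Prime :=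
  (mem_primesIoc.1 hp).2

lemma primesIoc_zero_eq_primesLE (n : ℕ) : primesIoc 0 n = n.primesLE := by
  rw [primesIoc, Nat.primesLE_eq_filter_Ioc_zero]

/-! ### Mertens' estimate -/

lemma sum_primesIoc_div_mul_log_le (n : ℕ) :
    ∑ p ∈ primesIoc 0 n, ((n / p : ℕ) : ℝ) * log p ≤ n * log n := by
  calc ∑ p ∈ primesIoc 0 n, ((n / p : ℕ) : ℝ) * log p
      = ∑ p ∈ primesIoc 0 n, ArithmeticFunction.vonMangoldt p * ((n / p : ℕ) : ℝ) :=
        sum_congr rfl fun p hp ↦ by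
          rw [ArithmeticFunction.vonMangoldt_apply_prime (prime_of_mem_primesIoc hp), mul_comm]
    _ ≤ ∑ d ∈ Ioc 0 n, ArithmeticFunction.vonMangoldt d * ((n / d : ℕ) : ℝ) :=
        sum_le_sum_of_subset_of_nonneg (filter_subset _ _) fun d _ _ ↦
          mul_nonneg ArithmeticFunction.vonMangoldt_nonneg (Nat.cast_nonneg _)
    _ = ∑ k ∈ Ioc 0 n, log k := by
        rw [← ArithmeticFunction.sum_Ioc_mul_zeta_eq_sum, ArithmeticFunction.vonMangoldt_mul_zeta]
        simp only [ArithmeticFunction.log_apply]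
    _ ≤ n * log n := by
        have log_le : ∀ k ∈ Ioc 0 n, log k ≤ log n := fun k hk ↦ by
          obtain ⟨hk0, hkn⟩ := mem_Ioc.1 hk
          gcongr
        simpa using sum_le_card_nsmul _ _ _ log_le

lemma sum_primesIoc_log_div_le (n : ℕ) :
    ∑ p ∈ primesIoc 0 n, log p / p ≤ log n + log 4 := by
  obtain rfl | hn := n.eq_zero_or_pos
  · simp [primesIoc, log_nonneg]
  have theta_le : ∑ p ∈ primesIoc 0 n, log p ≤ log 4 * n := by
    rw [primesIoc_zero_eq_primesLE, ← Chebyshev.theta_eq_sum_primesLE_log]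
    exact Chebyshev.theta_le_log4_mul_x n.cast_nonneg
  refine le_of_mul_le_mul_left ?_ (Nat.cast_pos.2 hn : (0 : ℝ) < n)
  calc n * ∑ p ∈ primesIoc 0 n, log p / p
      = ∑ p ∈ primesIoc 0 n, (n / p : ℝ) * log p := by
        rw [mul_sum]
        exact sum_congr rfl fun p _ ↦ mul_div_left_comm _ _ _ |>.trans (mul_comm _ _)
    _ ≤ ∑ p ∈ primesIoc 0 n, (((n / p : ℕ) : ℝ) + 1) * log p := by
        gcongr with p
        rw [← Nat.floor_div_eq_div (K := ℝ)]
        exact (Nat.lt_floor_add_one _).le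
    _ = ∑ p ∈ primesIoc 0 n, ((n / p : ℕ) : ℝ) * log p + ∑ p ∈ primesIoc 0 n, log p := by
        simp only [add_mul, one_mul, sum_add_distrib]
    _ ≤ n * log n + log 4 * n := add_le_add (sum_primesIoc_div_mul_log_le n) theta_le
    _ = n * (log n + log 4) := by ring

lemma mul_inv_sub_inv_le_log_sub_log {A B u v : ℝ} (hu : 0 < u) (huv : u ≤ v) (hA : A ≤ u + B) :
    (A - B) * (u⁻¹ - v⁻¹) ≤ log v - log u := by
  have hv : 0 < v := hu.trans_le huv
  calc (A - B) * (u⁻¹ - v⁻¹) ≤ u * (u⁻¹ - v⁻¹) := by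
        have := sub_nonneg.2 (inv_anti₀ hu huv)
        gcongr
        linarith
    _ = 1 - (v / u)⁻¹ := by field_simp
    _ ≤ log (v / u) := one_sub_inv_le_log_of_pos (div_pos hv hu)
    _ = log v - log u := log_div hv.ne' hu.ne'

-- Abel summation as an induction on `n`: `1 - u / v ≤ log (v / u)` replaces the integral of
-- `1 / (t log t)` over `[n, n + 1]`.
lemma sum_Ioc_div_log_le_sub {c : ℕ → ℝ} {B : ℝ}
    (hc : ∀ n, 2 ≤ n → ∑ k ∈ Ioc 0 n, c k ≤ log n + B) {m n : ℕ} (hm : 2 ≤ m) (hmn : m ≤ n) :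
    ∑ k ∈ Ioc m n, c k / log k ≤
      ((∑ k ∈ Ioc 0 n, c k - B) / log n + log (log n)) -
        ((∑ k ∈ Ioc 0 m, c k - B) / log m + log (log m)) := by
  induction n, hmn using Nat.le_induction with
  | base => simp
  | succ n hmn ih =>
    have hn : 2 ≤ n := hm.trans hmn
    have hlog : 0 < log n := log_pos (by exact_mod_cast hn)
    have hlog_le : log n ≤ log (n + 1 : ℕ) := by gcongr; exact n.le_succ
    have increment := mul_inv_sub_inv_le_log_sub_log hlog hlog_le (hc n hn)
    rw [sum_Ioc_succ_top hmn, sum_Ioc_succ_top n.zero_le]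
    simp only [div_eq_mul_inv] at ih ⊢
    linarith

lemma sum_Ioc_div_log_le {c : ℕ → ℝ} {B : ℝ}
    (hc : ∀ n, 2 ≤ n → ∑ k ∈ Ioc 0 n, c k ≤ log n + B) (hc0 : ∀ k, 0 ≤ c k) {m n : ℕ}
    (hm : 2 ≤ m) (hmn : m ≤ n) :
    ∑ k ∈ Ioc m n, c k / log k ≤ 1 + B / log m + (log (log n) - log (log m)) := by
  have hm_log : 0 < log m := log_pos (by exact_mod_cast hm)
  have hn_log : 0 < log n := log_pos (by exact_mod_cast hm.trans hmn)
  have upper : (∑ k ∈ Ioc 0 n, c k - B) / log n ≤ 1 :=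
    (div_le_one hn_log).2 (by linarith [hc n (hm.trans hmn)])
  have lower : -(B / log m) ≤ (∑ k ∈ Ioc 0 m, c k - B) / log m := by
    rw [← neg_div]
    gcongr
    linarith [sum_nonneg fun k (_ : k ∈ Ioc 0 m) ↦ hc0 k]
  linarith [sum_Ioc_div_log_le_sub hc hm hmn]

lemma sum_primesIoc_inv_le {m n : ℕ} (hm : 2 ≤ m) (hmn : m ≤ n) :
    ∑ p ∈ primesIoc m n, (p : ℝ)⁻¹ ≤ 3 + (log (log n) - log (log m)) := by
  let c : ℕ → ℝ := fun k ↦ if k.Prime then log k / k else 0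
  have hc : ∀ k, 2 ≤ k → ∑ j ∈ Ioc 0 k, c j ≤ log k + log 4 := fun k _ ↦ by
    simpa only [c, primesIoc, sum_filter] using sum_primesIoc_log_div_le k
  have hc0 : ∀ k, 0 ≤ c k := fun k ↦ by
    dsimp only [c]
    split_ifs <;> positivity
  have log_four_div : log 4 / log m ≤ 2 := by
    have : log 2 ≤ log m := by gcongr; exact_mod_cast hm
    rw [div_le_iff₀ (log_pos (by exact_mod_cast hm)), show (4 : ℝ) = 2 ^ 2 by norm_num, log_pow]
    push_cast
    linarith
  calc ∑ p ∈ primesIoc m n, (p : ℝ)⁻¹ = ∑ k ∈ Ioc m n, c k / log k := by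
        rw [primesIoc, sum_filter]
        refine sum_congr rfl fun k _ ↦ ?_
        by_cases hk : k.Prime
        · have : log k ≠ 0 := (log_pos (by exact_mod_cast hk.one_lt)).ne'
          simp only [c, if_pos hk]
          field_simp
        · simp only [c, if_neg hk, zero_div]
    _ ≤ 1 + log 4 / log m + (log (log n) - log (log m)) := sum_Ioc_div_log_le hc hc0 hm hmn
    _ ≤ 3 + (log (log n) - log (log m)) := by linarith

lemma neg_log_log_two_le : -log (log 2) ≤ 1 / 2 := by
  have inv_log_two : (log 2)⁻¹ ≤ 3 / 2 := by
    rw [inv_le_comm₀ (log_pos one_lt_two) (by norm_num)]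
    linarith [log_two_gt_d9]
  linarith [one_sub_inv_le_log_of_pos (log_pos one_lt_two)]

lemma sum_primesIoc_zero_inv_le {n : ℕ} (hn : 2 ≤ n) :
    ∑ p ∈ primesIoc 0 n, (p : ℝ)⁻¹ ≤ log (log n) + 4 := by
  have split_two : primesIoc 0 n = insert 2 (primesIoc 2 n) := by
    ext p
    have two_le : p.Prime → 2 ≤ p := Nat.Prime.two_le
    simp only [mem_primesIoc, mem_insert]
    grind [Nat.prime_two]
  rw [split_two, sum_insert (by simp [mem_primesIoc])]
  have mertens := sum_primesIoc_inv_le le_rfl hn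
  push_cast at mertens ⊢
  linarith [neg_log_log_two_le]

lemma log_le_two_mul_log_floor {y : ℝ} (hy : 2 ≤ y) : log y ≤ 2 * log ⌊y⌋₊ := by
  have two_le_floor : (2 : ℝ) ≤ ⌊y⌋₊ := by exact_mod_cast Nat.le_floor (by exact_mod_cast hy)
  have y_le : y ≤ (⌊y⌋₊ : ℝ) ^ 2 := by nlinarith [Nat.lt_floor_add_one y]
  calc log y ≤ log ((⌊y⌋₊ : ℝ) ^ 2) := log_le_log (by linarith) y_le
    _ = 2 * log ⌊y⌋₊ := by rw [log_pow]; norm_cast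

lemma sum_primesIoc_floor_inv_le {x y : ℝ} (hy : 2 ≤ y) (hyx : y ≤ x) :
    ∑ p ∈ primesIoc ⌊y⌋₊ ⌊x⌋₊, (p : ℝ)⁻¹ ≤ 4 + (log (log x) - log (log y)) := by
  have two_le_floor : 2 ≤ ⌊y⌋₊ := Nat.le_floor (by exact_mod_cast hy)
  have floor_le_floor : ⌊y⌋₊ ≤ ⌊x⌋₊ := Nat.floor_le_floor hyx
  have mertens := sum_primesIoc_inv_le two_le_floor floor_le_floor
  have loglog_x : log (log ⌊x⌋₊) ≤ log (log x) := by
    have : (1 : ℝ) < ⌊x⌋₊ := by exact_mod_cast two_le_floor.trans floor_le_floor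
    have := log_pos this
    gcongr
    exact Nat.floor_le (by linarith)
  have loglog_y : log (log y) ≤ 1 + log (log ⌊y⌋₊) := by
    have floor_log : 0 < log ⌊y⌋₊ := log_pos (by exact_mod_cast two_le_floor)
    calc log (log y) ≤ log (2 * log ⌊y⌋₊) :=
          log_le_log (log_pos (by linarith)) (log_le_two_mul_log_floor hy)
      _ = log 2 + log (log ⌊y⌋₊) := log_mul two_ne_zero floor_log.ne'
      _ ≤ 1 + log (log ⌊y⌋₊) := by linarith [log_two_lt_d9]
  linarith

lemma sum_primesIoc_floor_inv_le_of_rpow_le {α x y : ℝ} (hα : 0 < α) (hxy : x ^ α ≤ y)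
    (hy : 2 ≤ y) : ∑ p ∈ primesIoc ⌊y⌋₊ ⌊x⌋₊, (p : ℝ)⁻¹ ≤ 4 + |log α| := by
  obtain hyx | hxy' := le_or_gt y x
  · have hx : 1 < x := by linarith
    have hlog_x := log_pos hx
    have : log α + log (log x) ≤ log (log y) := by
      rw [← log_mul hα.ne' hlog_x.ne', ← log_rpow (by linarith)]
      have : 0 < log (x ^ α) := log_pos (one_lt_rpow hx hα)
      gcongr
    linarith [sum_primesIoc_floor_inv_le hy hyx, neg_le_abs (log α)]
  · rw [primesIoc, Ioc_eq_empty_of_le (Nat.floor_le_floor hxy'.le), filter_empty, sum_empty]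
    positivity

/-! ### Prime divisors and the totient ratio -/

lemma log_two_mul_card_primeFactors_le {a : ℕ} (ha : a ≠ 0) :
    log 2 * #a.primeFactors ≤ log a := by
  have two_pow_le : 2 ^ #a.primeFactors ≤ a :=
    (pow_card_le_prod _ _ _ fun p hp ↦ (Nat.prime_of_mem_primeFactors hp).two_le).trans
      (Nat.le_of_dvd ha.bot_lt (Nat.prod_primeFactors_dvd a))
  rw [mul_comm, ← log_pow]
  gcongr
  exact_mod_cast two_pow_le

lemma sum_primeFactors_gt_inv_le {a : ℕ} {x : ℝ} (ha : a ≠ 0) (hx : log a ≤ x) :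
    ∑ p ∈ a.primeFactors with ⌊x⌋₊ < p, (p : ℝ)⁻¹ ≤ 2 := by
  obtain h_empty | h_nonempty := a.primeFactors.eq_empty_or_nonempty
  · simp [h_empty]
  have card_pos : (0 : ℝ) < #a.primeFactors := by exact_mod_cast h_nonempty.card_pos
  have card_le : #a.primeFactors / 2 ≤ x := by
    nlinarith [log_two_mul_card_primeFactors_le ha, log_two_gt_d9]
  calc ∑ p ∈ a.primeFactors with ⌊x⌋₊ < p, (p : ℝ)⁻¹
      ≤ ∑ p ∈ a.primeFactors with ⌊x⌋₊ < p, (#a.primeFactors / 2 : ℝ)⁻¹ := by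
        gcongr with p hp
        exact card_le.trans (Nat.lt_of_floor_lt (mem_filter.1 hp).2).le
    _ ≤ ∑ p ∈ a.primeFactors, (#a.primeFactors / 2 : ℝ)⁻¹ :=
        sum_le_sum_of_subset_of_nonneg (filter_subset _ _) fun _ _ _ ↦ by positivity
    _ = 2 := by
        rw [sum_const, nsmul_eq_mul]
        field_simp

lemma exp_neg_add_sq_le_one_sub {x : ℝ} (hx : x ≤ 1 / 2) :
    exp (-(x + 2 * x ^ 2)) ≤ 1 - x := by
  rw [exp_neg]
  refine inv_le_of_inv_le₀ (by linarith) (le_trans ?_ (add_one_le_exp _))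
  rw [inv_le_iff_one_le_mul₀ (by linarith)]
  nlinarith [mul_nonneg (sq_nonneg x) (sub_nonneg.2 hx)]

lemma sum_primeFactors_inv_sq_le_one (a : ℕ) : ∑ p ∈ a.primeFactors, ((p : ℝ) ^ 2)⁻¹ ≤ 1 := by
  obtain rfl | ha := a.eq_zero_or_pos
  · simp
  have subset_Ioc : a.primeFactors ⊆ Ioc 1 a := fun p hp ↦
    mem_Ioc.2 ⟨(Nat.prime_of_mem_primeFactors hp).one_lt, Nat.le_of_mem_primeFactors hp⟩
  calc ∑ p ∈ a.primeFactors, ((p : ℝ) ^ 2)⁻¹ ≤ ∑ k ∈ Ioc 1 a, ((k : ℝ) ^ 2)⁻¹ :=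
        sum_le_sum_of_subset_of_nonneg subset_Ioc fun _ _ _ ↦ by positivity
    _ ≤ ((1 : ℕ) : ℝ)⁻¹ - (a : ℝ)⁻¹ := sum_Ioc_inv_sq_le_sub one_ne_zero ha
    _ ≤ 1 := by simp

lemma self_div_totient_le_exp (a : ℕ) :
    (a / a.totient : ℝ) ≤ exp (∑ p ∈ a.primeFactors, (p : ℝ)⁻¹ + 2) := by
  have totient_eq : (a.totient : ℝ) = a * ∏ p ∈ a.primeFactors, (1 - (p : ℝ)⁻¹) := by
    simpa using congrArg (Rat.cast : ℚ → ℝ) (Nat.totient_eq_mul_prod_factors a)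
  have exp_neg_le :
      exp (-(∑ p ∈ a.primeFactors, (p : ℝ)⁻¹ + 2)) ≤ ∏ p ∈ a.primeFactors, (1 - (p : ℝ)⁻¹) :=
    calc exp (-(∑ p ∈ a.primeFactors, (p : ℝ)⁻¹ + 2))
        ≤ exp (∑ p ∈ a.primeFactors, -((p : ℝ)⁻¹ + 2 * (p : ℝ)⁻¹ ^ 2)) := by
          rw [sum_neg_distrib, sum_add_distrib, ← mul_sum]
          simp only [inv_pow]
          gcongr
          linarith [sum_primeFactors_inv_sq_le_one a]
      _ = ∏ p ∈ a.primeFactors, exp (-((p : ℝ)⁻¹ + 2 * (p : ℝ)⁻¹ ^ 2)) := exp_sum _ _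
      _ ≤ ∏ p ∈ a.primeFactors, (1 - (p : ℝ)⁻¹) := by
          gcongr with p hp
          have two_le : (2 : ℝ) ≤ p := by
            exact_mod_cast (Nat.prime_of_mem_primeFactors hp).two_le
          exact exp_neg_add_sq_le_one_sub ((inv_anti₀ two_pos two_le).trans_eq (one_div 2).symm)
  refine div_le_of_le_mul₀ (Nat.cast_nonneg _) (exp_nonneg _) ?_
  calc (a : ℝ) = exp (∑ p ∈ a.primeFactors, (p : ℝ)⁻¹ + 2) *
        (a * exp (-(∑ p ∈ a.primeFactors, (p : ℝ)⁻¹ + 2))) := by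
        rw [exp_neg]
        field_simp
    _ ≤ exp (∑ p ∈ a.primeFactors, (p : ℝ)⁻¹ + 2) * a.totient := by
        rw [totient_eq]
        gcongr

lemma sum_primeFactors_inv_le_split (a s n m : ℕ) :
    ∑ p ∈ a.primeFactors, (p : ℝ)⁻¹ ≤
      ∑ p ∈ primesIoc 0 s, (p : ℝ)⁻¹ + ∑ p ∈ primesIoc s n with p ∣ a, (p : ℝ)⁻¹ +
        ∑ p ∈ primesIoc n m, (p : ℝ)⁻¹ + ∑ p ∈ a.primeFactors with m < p, (p : ℝ)⁻¹ := by
  have cover : a.primeFactors ⊆ ((primesIoc 0 s ∪ {p ∈ primesIoc s n | p ∣ a}) ∪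
      primesIoc n m) ∪ {p ∈ a.primeFactors | m < p} := fun p hp ↦ by
    have prime_p := Nat.prime_of_mem_primeFactors hp
    have p_pos := prime_p.pos
    simp only [mem_union, mem_filter, mem_primesIoc]
    grind [Nat.dvd_of_mem_primeFactors]
  have union_le : ∀ S T : Finset ℕ,
      ∑ p ∈ S ∪ T, (p : ℝ)⁻¹ ≤ ∑ p ∈ S, (p : ℝ)⁻¹ + ∑ p ∈ T, (p : ℝ)⁻¹ := fun S T ↦ by
    rw [← sum_union_inter]
    exact le_add_of_nonneg_right (sum_nonneg fun _ _ ↦ by positivity)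
  calc ∑ p ∈ a.primeFactors, (p : ℝ)⁻¹ ≤ _ :=
        sum_le_sum_of_subset_of_nonneg cover fun _ _ _ ↦ by positivity
    _ ≤ _ := union_le _ _
    _ ≤ _ := by
        gcongr
        refine (union_le _ _).trans ?_
        gcongr
        exact union_le _ _

lemma exp_le_one_add_two_mul {x : ℝ} (hx0 : 0 ≤ x) (hx : x ≤ 1) : exp x ≤ 1 + 2 * x := by
  have := (le_abs_self _).trans (abs_exp_sub_one_le (abs_le.2 ⟨by linarith, hx⟩))
  rw [abs_of_nonneg hx0] at this
  linarith

lemma exp_mul_sum_inv_le_prod {s : ℕ} {T : Finset ℕ} (hT : ∀ p ∈ T, s ≤ p) :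
    exp (s * ∑ p ∈ T, (p : ℝ)⁻¹) ≤ ∏ p ∈ T, (1 + 2 * s / (p : ℝ)) := by
  rw [mul_sum, exp_sum]
  gcongr with p hp
  rw [mul_div_assoc, div_eq_mul_inv]
  refine exp_le_one_add_two_mul (by positivity) ?_
  exact div_le_one_of_le₀ (by exact_mod_cast hT p hp) p.cast_nonneg

lemma totient_ratio_pow_le {a M : ℕ} {α y : ℝ} (ha : a ≠ 0) (haM : a ≤ M) (hα : 0 < α)
    (hMy : log M ^ α ≤ y) (hy : 2 ≤ y) (s : ℕ) :
    (a / a.totient : ℝ) ^ s ≤ exp (s * (log (log (s + 2)) + 12 + |log α|)) *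
      ∏ p ∈ primesIoc s ⌊y⌋₊ with p ∣ a, (1 + 2 * s / (p : ℝ)) := by
  have small : ∑ p ∈ primesIoc 0 s, (p : ℝ)⁻¹ ≤ log (log (s + 2)) + 4 := by
    have subset : primesIoc 0 s ⊆ primesIoc 0 (s + 2) :=
      filter_subset_filter _ (Ioc_subset_Ioc_right (by lia))
    refine (sum_le_sum_of_subset_of_nonneg subset fun _ _ _ ↦ by positivity).trans ?_
    exact_mod_cast sum_primesIoc_zero_inv_le (n := s + 2) (by lia)
  have medium := sum_primesIoc_floor_inv_le_of_rpow_le hα hMy hy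
  have large : ∑ p ∈ a.primeFactors with ⌊log M⌋₊ < p, (p : ℝ)⁻¹ ≤ 2 :=
    sum_primeFactors_gt_inv_le ha (by gcongr)
  have split := sum_primeFactors_inv_le_split a s ⌊y⌋₊ ⌊log M⌋₊
  calc (a / a.totient : ℝ) ^ s ≤ exp (∑ p ∈ a.primeFactors, (p : ℝ)⁻¹ + 2) ^ s := by
        gcongr
        exact self_div_totient_le_exp a
    _ = exp (s * (∑ p ∈ a.primeFactors, (p : ℝ)⁻¹ + 2)) := (exp_nat_mul _ _).symm
    _ ≤ exp (s * (log (log (s + 2)) + 12 + |log α| +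
          ∑ p ∈ primesIoc s ⌊y⌋₊ with p ∣ a, (p : ℝ)⁻¹)) := by
        exact exp_le_exp.2 (mul_le_mul_of_nonneg_left (by linarith) s.cast_nonneg)
    _ = exp (s * (log (log (s + 2)) + 12 + |log α|)) *
          exp (s * ∑ p ∈ primesIoc s ⌊y⌋₊ with p ∣ a, (p : ℝ)⁻¹) := by
        rw [mul_add, exp_add]
    _ ≤ exp (s * (log (log (s + 2)) + 12 + |log α|)) *
          ∏ p ∈ primesIoc s ⌊y⌋₊ with p ∣ a, (1 + 2 * s / (p : ℝ)) := by
        gcongr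
        exact exp_mul_sum_inv_le_prod fun p hp ↦ (mem_primesIoc.1 (mem_filter.1 hp).1).1.1.le

/-! ### Averaging over the sequence -/

lemma prod_dvd_iff_of_prime {T : Finset ℕ} (hT : ∀ p ∈ T, p.Prime) {a : ℕ} :
    ∏ p ∈ T, p ∣ a ↔ ∀ p ∈ T, p ∣ a :=
  ⟨fun h _ hp ↦ (dvd_prod_of_mem _ hp).trans h,
    prod_primes_dvd a fun p hp ↦ (hT p hp).prime⟩

lemma squarefree_prod_of_prime {T : Finset ℕ} (hT : ∀ p ∈ T, p.Prime) :
    Squarefree (∏ p ∈ T, p) :=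
  squarefree_prod_of_pairwise_isCoprime
    (fun p hp q hq hpq ↦
      Nat.coprime_iff_isRelPrime.1 ((Nat.coprime_primes (hT p hp) (hT q hq)).2 hpq))
    fun p hp ↦ (hT p hp).prime.squarefree

lemma map_prod_of_prime {R : Type*} [CommMonoid R] {g : ℕ → R} (hg1 : g 1 = 1)
    (hg : ∀ m n : ℕ, 0 < m → 0 < n → Nat.Coprime m n → g (m * n) = g m * g n)
    {T : Finset ℕ} (hT : ∀ p ∈ T, p.Prime) : g (∏ p ∈ T, p) = ∏ p ∈ T, g p := by
  induction T using Finset.induction_on with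
  | empty => simpa using hg1
  | insert q T hqT ih =>
    obtain ⟨hq, hT⟩ := (forall_mem_insert _ _ _).1 hT
    have coprime : Nat.Coprime q (∏ p ∈ T, p) := Nat.Coprime.prod_right fun p hp ↦
      (Nat.coprime_primes hq (hT p hp)).2 (ne_of_mem_of_not_mem hp hqT).symm
    rw [prod_insert hqT, prod_insert hqT,
      hg _ _ hq.pos (prod_pos fun p hp ↦ (hT p hp).pos) coprime, ih hT]

lemma sum_le_tsum_primes {f : ℕ → ℝ} (hf : ∀ p : ℕ, p.Prime → 0 ≤ f p)
    (hsum : Summable fun p : Nat.Primes ↦ f p) {T : Finset ℕ} (hT : ∀ p ∈ T, p.Prime) :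
    ∑ p ∈ T, f p ≤ ∑' p : Nat.Primes, f p := by
  rw [← sum_subtype_of_mem f hT]
  exact Summable.sum_le_tsum (f := fun p : Nat.Primes ↦ f p) (T.subtype Nat.Prime)
    (fun p _ ↦ hf p p.2) hsum

lemma prod_one_add_div_le_exp_tsum {g : ℕ → ℝ} (hg : ∀ p : ℕ, p.Prime → 0 < g p)
    (hsum : Summable fun p : Nat.Primes ↦ 1 / ((p : ℕ) * g p)) {T : Finset ℕ}
    (hT : ∀ p ∈ T, p.Prime) (s : ℕ) :
    ∏ p ∈ T, (1 + 2 * s / (p : ℝ) / g p) ≤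
      exp (s * (2 * ∑' p : Nat.Primes, 1 / ((p : ℕ) * g p))) := by
  calc ∏ p ∈ T, (1 + 2 * s / (p : ℝ) / g p) ≤ ∏ p ∈ T, exp (2 * s / (p : ℝ) / g p) := by
        refine prod_le_prod (fun p hp ↦ ?_) fun p _ ↦ by rw [add_comm]; exact add_one_le_exp _
        have := hg p (hT p hp)
        positivity
    _ = exp (s * (2 * ∑ p ∈ T, 1 / (p * g p))) := by
        rw [← exp_sum, mul_sum, mul_sum]
        exact congrArg exp <| sum_congr rfl fun p _ ↦ by rw [div_div]; ring
    _ ≤ exp (s * (2 * ∑' p : Nat.Primes, 1 / ((p : ℕ) * g p))) := by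
        gcongr
        refine sum_le_tsum_primes (f := fun p ↦ 1 / (p * g p)) (fun p hp ↦ ?_) hsum hT
        have := hg p hp
        positivity

section Averaging

variable {ι : Type*} {I : Finset ι} {a : ι → ℕ} {g : ℕ → ℝ} {K : ℝ}

lemma card_dvd_prod_le {y : ℝ} (hg1 : g 1 = 1)
    (hg : ∀ m n : ℕ, 0 < m → 0 < n → Nat.Coprime m n → g (m * n) = g m * g n)
    (hcount : ∀ n : ℕ, Squarefree n → (∀ p : ℕ, p.Prime → p ∣ n → (p : ℝ) ≤ y) →
      (#{i ∈ I | n ∣ a i} : ℝ) ≤ K / g n)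
    {T : Finset ℕ} (hT : T ⊆ primesIoc 0 ⌊y⌋₊) :
    (#{i ∈ I | ∏ p ∈ T, p ∣ a i} : ℝ) ≤ K / ∏ p ∈ T, g p := by
  have hTp : ∀ p ∈ T, p.Prime := fun p hp ↦ prime_of_mem_primesIoc (hT hp)
  rw [← map_prod_of_prime hg1 hg hTp]
  refine hcount _ (squarefree_prod_of_prime hTp) fun p hp hpT ↦ ?_
  obtain ⟨q, hq, hpq⟩ := (hp.prime.dvd_finsetProd_iff _).1 hpT
  obtain rfl := (Nat.prime_dvd_prime_iff_eq hp (hTp q hq)).1 hpq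
  exact (Nat.le_floor_iff' hp.ne_zero).1 (mem_primesIoc.1 (hT hq)).1.2

lemma sum_prod_one_add_eq_sum_powerset {P : Finset ℕ} (hP : ∀ p ∈ P, p.Prime) (h : ℕ → ℝ) :
    ∑ i ∈ I, ∏ p ∈ P with p ∣ a i, (1 + h p) =
      ∑ T ∈ P.powerset, #{i ∈ I | ∏ p ∈ T, p ∣ a i} * ∏ p ∈ T, h p := by
  have expand : ∀ i, ∏ p ∈ P with p ∣ a i, (1 + h p) =
      ∑ T ∈ P.powerset, if ∏ p ∈ T, p ∣ a i then ∏ p ∈ T, h p else 0 := fun i ↦ by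
    rw [prod_one_add, ← sum_filter]
    refine sum_congr ?_ fun _ _ ↦ rfl
    ext T
    simp only [mem_powerset, mem_filter, subset_iff, imp_and, forall_and]
    exact and_congr_right fun hTP ↦ (prod_dvd_iff_of_prime fun p hp ↦ hP p (hTP p hp)).symm
  simp_rw [expand]
  rw [sum_comm]
  simp_rw [← sum_filter, sum_const, nsmul_eq_mul]

lemma sum_prod_one_add_le {P : Finset ℕ} (hP : ∀ p ∈ P, p.Prime)
    (hcount : ∀ T ⊆ P, (#{i ∈ I | ∏ p ∈ T, p ∣ a i} : ℝ) ≤ K / ∏ p ∈ T, g p)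
    {h : ℕ → ℝ} (hh : ∀ p ∈ P, 0 ≤ h p) :
    ∑ i ∈ I, ∏ p ∈ P with p ∣ a i, (1 + h p) ≤ K * ∏ p ∈ P, (1 + h p / g p) := by
  rw [sum_prod_one_add_eq_sum_powerset hP, prod_one_add, mul_sum]
  refine sum_le_sum fun T hT ↦ ?_
  rw [mem_powerset] at hT
  calc #{i ∈ I | ∏ p ∈ T, p ∣ a i} * ∏ p ∈ T, h p
      ≤ (K / ∏ p ∈ T, g p) * ∏ p ∈ T, h p :=
        mul_le_mul_of_nonneg_right (hcount T hT) (prod_nonneg fun p hp ↦ hh p (hT hp))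
    _ = K * ∏ p ∈ T, h p / g p := by rw [prod_div_distrib]; ring

lemma sum_totient_ratio_pow_le {M : ℕ} (ha : ∀ i ∈ I, a i ≠ 0 ∧ a i ≤ M)
    (hg : ∀ p : ℕ, p.Prime → 0 < g p)
    (hsum : Summable fun p : Nat.Primes ↦ 1 / ((p : ℕ) * g p))
    {α y : ℝ} (hα : 0 < α) (hMy : log M ^ α ≤ y) (hy : 2 ≤ y)
    (hcount : ∀ T ⊆ primesIoc 0 ⌊y⌋₊, (#{i ∈ I | ∏ p ∈ T, p ∣ a i} : ℝ) ≤ K / ∏ p ∈ T, g p)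
    (s : ℕ) :
    ∑ i ∈ I, (a i / (a i).totient : ℝ) ^ s ≤
      exp (s * (log (log (s + 2)) + 12 + |log α| +
        2 * ∑' p : Nat.Primes, 1 / ((p : ℕ) * g p))) * K := by
  set E := exp (s * (log (log (s + 2)) + 12 + |log α|)) with hE
  have hP : ∀ p ∈ primesIoc s ⌊y⌋₊, p.Prime := fun p ↦ prime_of_mem_primesIoc
  have hPy : primesIoc s ⌊y⌋₊ ⊆ primesIoc 0 ⌊y⌋₊ :=
    filter_subset_filter _ (Ioc_subset_Ioc_left s.zero_le)
  have hK : 0 ≤ K := by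
    simpa using (Nat.cast_nonneg _).trans (hcount ∅ (empty_subset _))
  calc ∑ i ∈ I, (a i / (a i).totient : ℝ) ^ s
      ≤ ∑ i ∈ I, E * ∏ p ∈ primesIoc s ⌊y⌋₊ with p ∣ a i, (1 + 2 * s / (p : ℝ)) := by
        gcongr with i hi
        exact totient_ratio_pow_le (ha i hi).1 (ha i hi).2 hα hMy hy s
    _ ≤ E * (K * ∏ p ∈ primesIoc s ⌊y⌋₊, (1 + 2 * s / (p : ℝ) / g p)) := by
        rw [← mul_sum]
        gcongr
        exact sum_prod_one_add_le hP (fun T hT ↦ hcount T (hT.trans hPy)) fun p _ ↦ by positivity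
    _ ≤ E * (K * exp (s * (2 * ∑' p : Nat.Primes, 1 / ((p : ℕ) * g p)))) := by
        gcongr
        exact prod_one_add_div_le_exp_tsum hg hsum hP s
    _ = _ := by
        rw [mul_add, exp_add, ← hE]
        ring

end Averaging

theorem sum_totient_ratio_pow_le_exp_general (γ α L : ℝ) (hα : 0 < α) :
    ∃ C : ℝ, 0 < C ∧
      ∀ N M : ℕ,
      ∀ a : ℕ → ℕ, (∀ n, 1 ≤ n → n ≤ N → 0 < a n ∧ a n ≤ M) →
      ∀ g : ℕ → ℝ, g 1 = 1 →
      (∀ m n : ℕ, 0 < m → 0 < n → Nat.Coprime m n → g (m * n) = g m * g n) →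
      (∀ p : ℕ, p.Prime → 0 < g p) →
      (Summable fun p : Nat.Primes ↦ 1 / ((p : ℕ) * g p)) →
      ∑' p : Nat.Primes, 1 / ((p : ℕ) * g p) = L →
      ∀ y : ℝ, y = max (log M ^ α) 2 →
      (∀ n : ℕ, Squarefree n → (∀ p : ℕ, p.Prime → p ∣ n → (p : ℝ) ≤ y) →
        (#{k ∈ Icc 1 N | n ∣ a k} : ℝ) ≤ γ * N / g n) →
      ∀ s : ℕ, 0 < s →
      ∑ n ∈ Icc 1 N, (a n / (a n).totient : ℝ) ^ s ≤
        exp (s * log (log (s + 2)) + C * s) * N := by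
  refine ⟨12 + |log α| + 2 * |L| + |γ|, by positivity, ?_⟩
  intro N M a ha g hg1 hg hg_pos hsum hL y hy hω s hs
  have moment := sum_totient_ratio_pow_le (K := γ * N) (I := Icc 1 N)
    (fun n hn ↦ (ha n (mem_Icc.1 hn).1 (mem_Icc.1 hn).2).imp_left Nat.ne_of_gt)
    hg_pos hsum hα (hy ▸ le_max_left _ _) (hy ▸ le_max_right _ _)
    (fun T hT ↦ card_dvd_prod_le hg1 hg hω hT) s
  have γ_le : γ ≤ exp (s * |γ|) := by
    have : |γ| ≤ s * |γ| := le_mul_of_one_le_left (abs_nonneg γ) (by exact_mod_cast hs)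
    linarith [le_abs_self γ, add_one_le_exp (s * |γ|)]
  rw [hL] at moment
  calc ∑ n ∈ Icc 1 N, (a n / (a n).totient : ℝ) ^ s
      ≤ exp (s * (log (log (s + 2)) + 12 + |log α| + 2 * L)) * (γ * N) := moment
    _ ≤ exp (s * (log (log (s + 2)) + 12 + |log α| + 2 * L)) * (exp (s * |γ|) * N) := by
        gcongr
    _ ≤ exp (s * (log (log (s + 2)) + 12 + |log α| + 2 * |L|)) * (exp (s * |γ|) * N) := by
        gcongr
        exact le_abs_self L
    _ = exp (s * log (log (s + 2)) + (12 + |log α| + 2 * |L| + |γ|) * s) * N := by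
        rw [← mul_assoc, ← exp_add]
        ring_nf

/-- Theorem (Radomskii, Theorem 2, inequality (1)): under the hypotheses of Theorem 1 with
`K = γN`, `g(p) ≥ c₀`, and `L = ∑_p 1/(p g(p)) < ∞`, there is a constant `C` depending only
on `γ`, `L`, `c₀`, `α` such that `∑ (a_n/φ(a_n))^s ≤ exp(s log log(s+2) + Cs) N`. -/
theorem sum_totient_ratio_pow_le_exp (γ c₀ α L : ℝ) (hγ : 0 < γ) (hc₀ : 0 < c₀)
    (hα : α ∈ Set.Ioc (0 : ℝ) 1) :
    ∃ C : ℝ, 0 < C ∧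
      ∀ (N M : ℕ), 0 < N → 0 < M →
      ∀ a : ℕ → ℕ, (∀ n, 1 ≤ n → n ≤ N → 0 < a n ∧ a n ≤ M) →
      ∀ g : ℕ → ℝ, g 1 = 1 →
      (∀ m n : ℕ, 0 < m → 0 < n → Nat.Coprime m n → g (m * n) = g m * g n) →
      (∀ p : ℕ, p.Prime → c₀ ≤ g p) →
      (Summable fun p : Nat.Primes => 1 / (((p : ℕ) : ℝ) * g (p : ℕ))) →
      (∑' p : Nat.Primes, 1 / (((p : ℕ) : ℝ) * g (p : ℕ))) = L →
      ∀ y : ℝ, y = max (Real.log M ^ α) 2 →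
      (∀ n : ℕ, Squarefree n → (∀ p : ℕ, p.Prime → p ∣ n → (p : ℝ) ≤ y) →
        (((Finset.Icc 1 N).filter fun k => n ∣ a k).card : ℝ) ≤ γ * N / g n) →
      ∀ s : ℕ, 0 < s →
      ∑ n ∈ Finset.Icc 1 N, ((a n : ℝ) / (Nat.totient (a n) : ℝ)) ^ s ≤
        Real.exp (s * Real.log (Real.log (s + 2)) + C * s) * N := by
  obtain ⟨C, hC, bound⟩ := sum_totient_ratio_pow_le_exp_general γ α L hα.1
  exact ⟨C, hC, fun N M _ _ a ha g hg1 hg hgp ↦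
    bound N M a ha g hg1 hg fun p hp ↦ hc₀.trans_le (hgp p hp)⟩
end

section
/- Let N, M be positive integers, a_1, ..., a_N positive integers with a_n ≤ M for all n, and for d ∈ ℕ set ω(d) = #{n ≤ N : d divides a_n}. Let α ∈ (0,1], y = max((ln M)^α, 2), and let 𝒟 be the collection of squarefree positive integers all of whose prime divisors lie in (1, y]. Suppose γ > 0, c_0 > 0, g is a multiplicative arithmetic function with g(p) ≥ c_0 for every prime p, L := Σ_p 1/(p·g(p)) < ∞ (sum over all primes), and ω(n) ≤ γN/g(n) for every n ∈ 𝒟. Then there exist constants c_1, c_2 > 0 depending only on γ, L, c_0, and α such that for every real t > 0, #{n ≤ N : a_n/φ(a_n) > t} ≤ c_1 · exp(−exp(c_2·t)) · N. -/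
/-!
Write `a / φ(a) = ∏_{p ∣ a} (1 - 1/p)⁻¹` and cut the primes at `z = exp (c₂ t)` and at `y`. The
primes up to `z` contribute at most `O(log z) = O(c₂ t)` by Mertens' bound. The primes above `y`
contribute `O(1)`: Chebyshev's bound `∑_{p ≤ x} log p / p ≤ 2 log x` handles those up to a power
of `y` exceeding `log a`, and beyond that `a` has too few prime factors to matter. So for small
`c₂`, `a / φ(a) > t` forces `F(a) = ∑_{p ∣ a, z < p ≤ y} 1/p` to be large. The hypothesis on `ω`
bounds the exponential moment `∑_k exp (z F(a_k))` by `γ N exp (2 z L)`, and Markov's inequality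
at the level `F = 2 L + 1` gives `γ N exp (-z)`.
-/

section

open Finset Real
open Nat (primesLE mem_primesLE prime_of_mem_primesLE)

section Mertens

lemma prod_primesLE_pow_div_dvd_factorial (n : ℕ) :
    ∏ p ∈ primesLE n, p ^ (n / p) ∣ n.factorial := by
  refine prod_dvd_of_isRelPrime (fun p hp q hq hpq ↦ ?_) fun p hp ↦ ?_
  · have hcop : p.Coprime q :=
      (Nat.coprime_primes (prime_of_mem_primesLE hp) (prime_of_mem_primesLE hq)).2 hpq
    exact Nat.coprime_iff_isRelPrime.1 (hcop.pow _ _)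
  · rw [(prime_of_mem_primesLE hp).pow_dvd_factorial_iff (b := Nat.log p n + 2) (by lia)]
    simpa using single_le_sum (f := fun i ↦ n / p ^ i) (fun _ _ ↦ Nat.zero_le _)
      (show 1 ∈ Ico 1 (Nat.log p n + 2) by simp)

lemma sum_primesLE_div_mul_log_le (n : ℕ) :
    ∑ p ∈ primesLE n, ((n / p : ℕ) : ℝ) * log p ≤ n * log n := by
  have hpos : ∀ p ∈ primesLE n, p ^ (n / p) ≠ 0 := fun p hp ↦
    pow_ne_zero _ (prime_of_mem_primesLE hp).ne_zero
  have hle : ∏ p ∈ primesLE n, p ^ (n / p) ≤ n ^ n :=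
    (Nat.le_of_dvd n.factorial_pos (prod_primesLE_pow_div_dvd_factorial n)).trans
      n.factorial_le_pow
  calc ∑ p ∈ primesLE n, ((n / p : ℕ) : ℝ) * log p
      = log ((∏ p ∈ primesLE n, p ^ (n / p) : ℕ) : ℝ) := by
        rw [Nat.cast_prod, log_prod fun p hp ↦ Nat.cast_ne_zero.2 (hpos p hp)]
        simp only [Nat.cast_pow, log_pow]
    _ ≤ log ((n ^ n : ℕ) : ℝ) :=
        log_le_log (mod_cast Nat.pos_of_ne_zero (prod_ne_zero_iff.2 hpos)) (mod_cast hle)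
    _ = n * log n := by rw [Nat.cast_pow, log_pow]

lemma sum_primesLE_log_div_le_two_mul_log (n : ℕ) :
    ∑ p ∈ primesLE n, log p / p ≤ 2 * log n := by
  obtain rfl | hn := n.eq_zero_or_pos
  · simp
  have hterm : ∀ p ∈ primesLE n, n * (log p / p) ≤ 2 * (((n / p : ℕ) : ℝ) * log p) := by
    intro p hp
    obtain ⟨hpn, hp⟩ := mem_primesLE.1 hp
    have hp0 : (0 : ℝ) < p := mod_cast hp.pos
    have hn_le : (n : ℝ) ≤ 2 * (n / p : ℕ) * p := by
      have hdiv : 1 ≤ n / p := (Nat.one_le_div_iff hp.pos).2 hpn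
      have hmod : n % p < p := Nat.mod_lt n hp.pos
      have hsplit : p * (n / p) + n % p = n := Nat.div_add_mod n p
      exact_mod_cast (by nlinarith : n ≤ 2 * (n / p) * p)
    calc n * (log p / p) = n / p * log p := by ring
      _ ≤ 2 * (n / p : ℕ) * log p := by
        gcongr
        exact (div_le_iff₀ hp0).2 hn_le
      _ = 2 * (((n / p : ℕ) : ℝ) * log p) := by ring
  have hn0 : (0 : ℝ) < n := mod_cast hn
  refine le_of_mul_le_mul_left ?_ hn0
  calc n * ∑ p ∈ primesLE n, log p / p
      ≤ 2 * ∑ p ∈ primesLE n, ((n / p : ℕ) : ℝ) * log p := by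
        rw [mul_sum, mul_sum]; exact sum_le_sum hterm
    _ ≤ 2 * (n * log n) := by gcongr; exact sum_primesLE_div_mul_log_le n
    _ = n * (2 * log n) := by ring

lemma sum_primesLE_floor_log_div_le_two_mul_log {x : ℝ} (hx : 1 ≤ x) :
    ∑ p ∈ primesLE ⌊x⌋₊, log p / p ≤ 2 * log x := by
  have hfloor : (0 : ℝ) < ⌊x⌋₊ := mod_cast Nat.floor_pos.2 hx
  refine (sum_primesLE_log_div_le_two_mul_log _).trans ?_
  gcongr
  exact Nat.floor_le (by linarith)

lemma tsum_rpow_neg_le_one_add_inv {σ : ℝ} (hσ : 1 < σ) :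
    ∑' n : ℕ, (n : ℝ) ^ (-σ) ≤ 1 + (σ - 1)⁻¹ := by
  have hshift : ∑' n : ℕ, (n : ℝ) ^ (-σ) = ∑' n : ℕ, 1 / (n + 1 : ℝ) ^ σ := by
    rw [(summable_nat_rpow.2 (by linarith)).tsum_eq_zero_add, Nat.cast_zero,
      zero_rpow (by linarith), zero_add]
    refine tsum_congr fun n ↦ ?_
    rw [rpow_neg (Nat.cast_nonneg _), one_div, Nat.cast_add_one]
  have hzeta := ZetaAsymptotics.zeta_limit_aux1 hσ
  have hnonneg : 0 ≤ σ * ZetaAsymptotics.termTSum σ :=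
    mul_nonneg (by linarith) (tsum_nonneg fun _ ↦ ZetaAsymptotics.term_nonneg _ _)
  rw [hshift, ← one_div]
  linarith

lemma prod_primesLE_one_sub_rpow_neg_inv_le {σ : ℝ} (hσ : 1 < σ) (n : ℕ) :
    ∏ p ∈ primesLE n, (1 - (p : ℝ) ^ (-σ))⁻¹ ≤ 1 + (σ - 1)⁻¹ := by
  let f : ℕ →* ℝ :=
    { toFun := fun n ↦ (n : ℝ) ^ (-σ)
      map_one' := by simp
      map_mul' := fun m n ↦ by
        rw [Nat.cast_mul, mul_rpow (Nat.cast_nonneg _) (Nat.cast_nonneg _)] }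
  have hf : Summable f := summable_nat_rpow.2 (by linarith)
  calc ∏ p ∈ primesLE n, (1 - (p : ℝ) ^ (-σ))⁻¹
      = ∑' m : Nat.smoothNumbers (n + 1), f m :=
        EulerProduct.prod_primesBelow_geometric_eq_tsum_smoothNumbers hf (n + 1)
    _ ≤ ∑' m, f m := hf.tsum_subtype_le _ _ fun _ ↦ rpow_nonneg (Nat.cast_nonneg _) _
    _ ≤ 1 + (σ - 1)⁻¹ := tsum_rpow_neg_le_one_add_inv hσ

lemma one_sub_inv_inv_le_one_sub_rpow_neg_inv_mul_exp {p δ : ℝ} (hp : 2 ≤ p) (hδ : 0 ≤ δ) :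
    (1 - p⁻¹)⁻¹ ≤ (1 - p ^ (-(1 + δ)))⁻¹ * exp (2 * δ * (log p / p)) := by
  have hp0 : 0 < p := by linarith
  have hinv : p⁻¹ ≤ 2⁻¹ := by gcongr
  have hinv0 : 0 < p⁻¹ := inv_pos.2 hp0
  have hlog : 0 ≤ log p := log_nonneg (by linarith)
  have hpow : p ^ (-(1 + δ)) = p⁻¹ * exp (-(δ * log p)) := by
    rw [neg_add, rpow_add hp0, rpow_neg_one, rpow_def_of_pos hp0]
    ring_nf
  have hpow_le : p ^ (-(1 + δ)) ≤ p⁻¹ := by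
    rw [← rpow_neg_one]
    exact rpow_le_rpow_of_exponent_le (by linarith) (by linarith)
  have hsub : 1 - p ^ (-(1 + δ)) ≤ (1 - p⁻¹) * exp (2 * δ * (log p / p)) := by
    have hu : 0 ≤ p⁻¹ * (δ * log p) := by positivity
    calc 1 - p ^ (-(1 + δ)) ≤ 1 - p⁻¹ * (-(δ * log p) + 1) := by
          rw [hpow]; gcongr; exact add_one_le_exp _
      _ ≤ (1 - p⁻¹) * (2 * δ * (log p / p) + 1) := by
          rw [div_eq_mul_inv]; nlinarith
      _ ≤ (1 - p⁻¹) * exp (2 * δ * (log p / p)) := by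
          gcongr
          · linarith
          · exact add_one_le_exp _
  rw [inv_mul_eq_div, le_div_iff₀ (by linarith), inv_mul_le_iff₀ (by linarith)]
  exact hsub

/- Mertens' bound, by comparison with the Euler product at `1 + 1 / log x`. -/
lemma prod_primesLE_one_sub_inv_inv_le_mul_log {x : ℝ} (hx : 2 ≤ x) :
    ∏ p ∈ primesLE ⌊x⌋₊, (1 - (p : ℝ)⁻¹)⁻¹ ≤ 3 * exp 4 * log x := by
  have hlog : 1 / 2 ≤ log x := by
    have := log_le_log two_pos hx
    linarith [log_two_gt_d9]
  have hlog0 : 0 < log x := by linarith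
  set δ := (log x)⁻¹ with hδ
  have hδ0 : 0 < δ := inv_pos.2 hlog0
  calc ∏ p ∈ primesLE ⌊x⌋₊, (1 - (p : ℝ)⁻¹)⁻¹
      ≤ ∏ p ∈ primesLE ⌊x⌋₊,
          ((1 - (p : ℝ) ^ (-(1 + δ)))⁻¹ * exp (2 * δ * (log p / p))) := by
        refine prod_le_prod (fun p _ ↦ ?_) fun p hp ↦ ?_
        · exact inv_nonneg.2 (sub_nonneg.2 p.cast_inv_le_one)
        · exact one_sub_inv_inv_le_one_sub_rpow_neg_inv_mul_exp
            (mod_cast (prime_of_mem_primesLE hp).two_le) hδ0.le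
    _ = (∏ p ∈ primesLE ⌊x⌋₊, (1 - (p : ℝ) ^ (-(1 + δ)))⁻¹) *
          exp (2 * δ * ∑ p ∈ primesLE ⌊x⌋₊, log p / p) := by
        rw [prod_mul_distrib, ← exp_sum, ← mul_sum]
    _ ≤ (1 + (1 + δ - 1)⁻¹) * exp (2 * δ * (2 * log x)) := by
        gcongr
        · rw [add_sub_cancel_left]; positivity
        · exact prod_primesLE_one_sub_rpow_neg_inv_le (by linarith) _
        · exact sum_primesLE_floor_log_div_le_two_mul_log (by linarith)
    _ = (1 + log x) * exp 4 := by
        rw [add_sub_cancel_left, hδ, inv_inv]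
        congr 2
        field_simp
        norm_num
    _ ≤ 3 * exp 4 * log x := by nlinarith [exp_pos 4]

end Mertens

section PrimeFactors

lemma lt_of_prime_of_notMem_primesLE_floor {p : ℕ} (hp : p.Prime) {x : ℝ}
    (hpx : p ∉ primesLE ⌊x⌋₊) : x < p :=
  Nat.lt_of_floor_lt (not_le.1 fun h ↦ hpx (mem_primesLE.2 ⟨h, hp⟩))

lemma sum_sdiff_le_sum_sdiff_add_sum_sdiff {ι : Type*} [DecidableEq ι] (s t u : Finset ι)
    {f : ι → ℝ} (hf : ∀ i, 0 ≤ f i) :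
    ∑ i ∈ s \ u, f i ≤ ∑ i ∈ s \ t, f i + ∑ i ∈ t \ u, f i := by
  rw [← sum_union (disjoint_sdiff_self_left.mono_right sdiff_subset)]
  exact sum_le_sum_of_subset_of_nonneg (sdiff_triangle s t u) fun i _ _ ↦ hf i

lemma sum_primeFactors_log_le_log {n : ℕ} (hn : n ≠ 0) :
    ∑ p ∈ n.primeFactors, log p ≤ log n := by
  have hne : ∀ p ∈ n.primeFactors, (p : ℝ) ≠ 0 := fun p hp ↦
    mod_cast (Nat.prime_of_mem_primeFactors hp).ne_zero
  rw [← log_prod hne, ← Nat.cast_prod]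
  refine log_le_log ?_ (mod_cast Nat.le_of_dvd (Nat.pos_of_ne_zero hn) n.prod_primeFactors_dvd)
  exact_mod_cast prod_pos fun p hp ↦ (Nat.prime_of_mem_primeFactors hp).pos

lemma sum_primeFactors_sdiff_primesLE_inv_le {n : ℕ} (hn : n ≠ 0) {x : ℝ} (hx : 2 ≤ x) :
    ∑ p ∈ n.primeFactors \ primesLE ⌊x⌋₊, (p : ℝ)⁻¹ ≤ 2 * log n / x := by
  have hterm : ∀ p ∈ n.primeFactors \ primesLE ⌊x⌋₊, (p : ℝ)⁻¹ ≤ 2 / x * log p := by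
    intro p hp
    obtain ⟨hpn, hpx⟩ := mem_sdiff.1 hp
    have hxp : x < p :=
      lt_of_prime_of_notMem_primesLE_floor (Nat.prime_of_mem_primeFactors hpn) hpx
    have hlog : 1 ≤ 2 * log p := by
      have := log_le_log two_pos (hx.trans hxp.le)
      linarith [log_two_gt_d9]
    calc (p : ℝ)⁻¹ ≤ x⁻¹ := by gcongr
      _ ≤ x⁻¹ * (2 * log p) := le_mul_of_one_le_right (by positivity) hlog
      _ = 2 / x * log p := by ring
  calc ∑ p ∈ n.primeFactors \ primesLE ⌊x⌋₊, (p : ℝ)⁻¹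
      ≤ ∑ p ∈ n.primeFactors \ primesLE ⌊x⌋₊, 2 / x * log p := sum_le_sum hterm
    _ ≤ ∑ p ∈ n.primeFactors, 2 / x * log p :=
        sum_le_sum_of_subset_of_nonneg sdiff_subset fun p _ _ ↦ by positivity
    _ ≤ 2 / x * log n := by
        rw [← mul_sum]; gcongr; exact sum_primeFactors_log_le_log hn
    _ = 2 * log n / x := by ring

lemma sum_primesLE_sdiff_primesLE_inv_le {x y : ℝ} (hx : 1 ≤ x) (hy : 1 < y) :
    ∑ p ∈ primesLE ⌊x⌋₊ \ primesLE ⌊y⌋₊, (p : ℝ)⁻¹ ≤ 2 * log x / log y := by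
  have hlogy : 0 < log y := log_pos hy
  calc ∑ p ∈ primesLE ⌊x⌋₊ \ primesLE ⌊y⌋₊, (p : ℝ)⁻¹
      ≤ ∑ p ∈ primesLE ⌊x⌋₊ \ primesLE ⌊y⌋₊, log p / p / log y := by
        refine sum_le_sum fun p hp ↦ ?_
        obtain ⟨hpx, hpy⟩ := mem_sdiff.1 hp
        have hyp : y < p := lt_of_prime_of_notMem_primesLE_floor (prime_of_mem_primesLE hpx) hpy
        rw [le_div_iff₀ hlogy, div_eq_inv_mul]
        gcongr
    _ ≤ ∑ p ∈ primesLE ⌊x⌋₊, log p / p / log y :=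
        sum_le_sum_of_subset_of_nonneg sdiff_subset fun p _ _ ↦ by positivity
    _ ≤ 2 * log x / log y := by
        rw [← sum_div]; gcongr; exact sum_primesLE_floor_log_div_le_two_mul_log hx

/- The sum is split at `y ^ (κ + 1)`, which is at least `y * log n`. -/
lemma sum_primeFactors_sdiff_primesLE_inv_le_of_log_le_rpow {n : ℕ} (hn : n ≠ 0) {y κ : ℝ}
    (hy : 2 ≤ y) (hκ : 0 ≤ κ) (hlog : log n ≤ y ^ κ) :
    ∑ p ∈ n.primeFactors \ primesLE ⌊y⌋₊, (p : ℝ)⁻¹ ≤ 2 * κ + 3 := by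
  have hy0 : 0 < y := by linarith
  have hlogy : 0 < log y := log_pos (by linarith)
  have hyx : y ≤ y ^ (κ + 1) := self_le_rpow_of_one_le (by linarith) (by linarith)
  have hmid : ∑ p ∈ primesLE ⌊y ^ (κ + 1)⌋₊ \ primesLE ⌊y⌋₊, (p : ℝ)⁻¹ ≤ 2 * κ + 2 := by
    refine (sum_primesLE_sdiff_primesLE_inv_le (by linarith) (by linarith)).trans_eq ?_
    rw [log_rpow hy0]
    field_simp
  have hlarge : ∑ p ∈ n.primeFactors \ primesLE ⌊y ^ (κ + 1)⌋₊, (p : ℝ)⁻¹ ≤ 1 := by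
    refine (sum_primeFactors_sdiff_primesLE_inv_le hn (hy.trans hyx)).trans ?_
    rw [div_le_one (by linarith), rpow_add_one hy0.ne', mul_comm _ y]
    gcongr
  have hsplit := sum_sdiff_le_sum_sdiff_add_sum_sdiff n.primeFactors
    (primesLE ⌊y ^ (κ + 1)⌋₊) (primesLE ⌊y⌋₊) (f := fun p ↦ (p : ℝ)⁻¹) fun p ↦ by positivity
  linarith

end PrimeFactors

section TotientRatio

lemma cast_div_totient_eq_prod_primeFactors {n : ℕ} (hn : n ≠ 0) :
    (n : ℝ) / n.totient = ∏ p ∈ n.primeFactors, (1 - (p : ℝ)⁻¹)⁻¹ := by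
  have htotient : (n.totient : ℝ) = n * ∏ p ∈ n.primeFactors, (1 - (p : ℝ)⁻¹) := by
    have h := congrArg (fun q : ℚ ↦ (q : ℝ)) n.totient_eq_mul_prod_factors
    push_cast at h
    exact h
  rw [htotient, prod_inv_distrib, div_mul_cancel_left₀ (Nat.cast_ne_zero.2 hn)]

lemma one_sub_inv_inv_le_exp {x : ℝ} (hx : 2 ≤ x) : (1 - x⁻¹)⁻¹ ≤ exp (2 * x⁻¹) := by
  have hinv : x⁻¹ ≤ 2⁻¹ := by gcongr
  have hinv0 : 0 < x⁻¹ := by positivity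
  rw [inv_le_iff_one_le_mul₀ (by linarith)]
  nlinarith [add_one_le_exp (2 * x⁻¹)]

lemma cast_div_totient_le {n : ℕ} (hn : n ≠ 0) {z : ℝ} (hz : 2 ≤ z) :
    (n : ℝ) / n.totient ≤
      3 * exp 4 * log z * exp (2 * ∑ p ∈ n.primeFactors \ primesLE ⌊z⌋₊, (p : ℝ)⁻¹) := by
  have hnonneg : ∀ p : ℕ, 0 ≤ (1 - (p : ℝ)⁻¹)⁻¹ := fun p ↦
    inv_nonneg.2 (sub_nonneg.2 p.cast_inv_le_one)
  have hone : ∀ p : ℕ, p.Prime → 1 ≤ (1 - (p : ℝ)⁻¹)⁻¹ := fun p hp ↦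
    (one_le_inv₀ (sub_pos.2 (inv_lt_one_of_one_lt₀ (mod_cast hp.one_lt)))).2
      (sub_le_self _ (by positivity))
  have hsmall : ∏ p ∈ n.primeFactors ∩ primesLE ⌊z⌋₊, (1 - (p : ℝ)⁻¹)⁻¹ ≤
      3 * exp 4 * log z :=
    (prod_le_prod_of_subset_of_one_le inter_subset_right (fun p _ ↦ hnonneg p)
      fun p hp _ ↦ hone p (prime_of_mem_primesLE hp)).trans
      (prod_primesLE_one_sub_inv_inv_le_mul_log hz)
  have hlarge : ∏ p ∈ n.primeFactors \ primesLE ⌊z⌋₊, (1 - (p : ℝ)⁻¹)⁻¹ ≤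
      exp (2 * ∑ p ∈ n.primeFactors \ primesLE ⌊z⌋₊, (p : ℝ)⁻¹) := by
    rw [mul_sum, exp_sum]
    refine prod_le_prod (fun p _ ↦ hnonneg p) fun p hp ↦ one_sub_inv_inv_le_exp ?_
    exact_mod_cast (Nat.prime_of_mem_primeFactors (mem_sdiff.1 hp).1).two_le
  rw [cast_div_totient_eq_prod_primeFactors hn, ← prod_inter_mul_prod_sdiff _ (primesLE ⌊z⌋₊)]
  exact mul_le_mul hsmall hlarge (prod_nonneg fun p _ ↦ hnonneg p)
    ((prod_nonneg fun p _ ↦ hnonneg p).trans hsmall)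

lemma cast_div_totient_le_of_log_le_rpow {n : ℕ} (hn : n ≠ 0) {y z κ : ℝ} (hy : 2 ≤ y)
    (hz : 2 ≤ z) (hκ : 0 ≤ κ) (hlog : log n ≤ y ^ κ) :
    (n : ℝ) / n.totient ≤ 3 * exp (4 * κ + 10) * log z *
      exp (2 * ∑ p ∈ primesLE ⌊y⌋₊ \ primesLE ⌊z⌋₊ with p ∣ n, (p : ℝ)⁻¹) := by
  have hsum : ∑ p ∈ n.primeFactors \ primesLE ⌊z⌋₊, (p : ℝ)⁻¹ ≤ (2 * κ + 3) +
      ∑ p ∈ primesLE ⌊y⌋₊ \ primesLE ⌊z⌋₊ with p ∣ n, (p : ℝ)⁻¹ := by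
    have hout : n.primeFactors \ {p ∈ primesLE ⌊y⌋₊ | p ∣ n} = n.primeFactors \ primesLE ⌊y⌋₊ := by
      grind
    have hmid : {p ∈ primesLE ⌊y⌋₊ | p ∣ n} \ primesLE ⌊z⌋₊ =
        {p ∈ primesLE ⌊y⌋₊ \ primesLE ⌊z⌋₊ | p ∣ n} := by grind
    have hsplit := sum_sdiff_le_sum_sdiff_add_sum_sdiff n.primeFactors
      {p ∈ primesLE ⌊y⌋₊ | p ∣ n} (primesLE ⌊z⌋₊) (f := fun p ↦ (p : ℝ)⁻¹) fun p ↦ by positivity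
    rw [hout, hmid] at hsplit
    linarith [sum_primeFactors_sdiff_primesLE_inv_le_of_log_le_rpow hn hy hκ hlog]
  have hlogz : 0 ≤ log z := log_nonneg (by linarith)
  set F := ∑ p ∈ primesLE ⌊y⌋₊ \ primesLE ⌊z⌋₊ with p ∣ n, (p : ℝ)⁻¹
  calc (n : ℝ) / n.totient
      ≤ 3 * exp 4 * log z * exp (2 * ∑ p ∈ n.primeFactors \ primesLE ⌊z⌋₊, (p : ℝ)⁻¹) :=
        cast_div_totient_le hn hz
    _ ≤ 3 * exp 4 * log z * exp (2 * ((2 * κ + 3) + F)) := by gcongr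
    _ = 3 * (exp 4 * exp (2 * (2 * κ + 3))) * log z * exp (2 * F) := by
        rw [mul_add 2, exp_add]; ring
    _ = 3 * exp (4 * κ + 10) * log z * exp (2 * F) := by
        rw [← exp_add]; ring_nf

end TotientRatio

section ExponentialMoment

variable {ι κ : Type*} {s : Finset ι} {P : Finset κ} {r : ι → κ → Prop} [∀ i, DecidablePred (r i)]
  {K : ℝ} {g : κ → ℝ}

lemma sum_prod_filter_one_add_le {f : κ → ℝ} (hf : ∀ p ∈ P, 0 ≤ f p)
    (hcard : ∀ T ⊆ P, (#{k ∈ s | ∀ p ∈ T, r k p} : ℝ) ≤ K / ∏ p ∈ T, g p) :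
    ∑ k ∈ s, ∏ p ∈ P with r k p, (1 + f p) ≤ K * ∏ p ∈ P, (1 + f p / g p) := by
  have hexpand : ∀ k, ∏ p ∈ P with r k p, (1 + f p) =
      ∑ T ∈ P.powerset, if ∀ p ∈ T, r k p then ∏ p ∈ T, f p else 0 := by
    intro k
    rw [prod_one_add, ← sum_filter]
    congr 1
    ext T
    simp only [mem_powerset, mem_filter, subset_iff, imp_and, forall_and]
  simp_rw [hexpand]
  rw [sum_comm, prod_one_add, mul_sum]
  refine sum_le_sum fun T hT ↦ ?_
  rw [mem_powerset] at hT
  calc ∑ k ∈ s, (if ∀ p ∈ T, r k p then ∏ p ∈ T, f p else 0)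
      = #{k ∈ s | ∀ p ∈ T, r k p} * ∏ p ∈ T, f p := by
        rw [← sum_filter, sum_const, nsmul_eq_mul]
    _ ≤ K / (∏ p ∈ T, g p) * ∏ p ∈ T, f p :=
        mul_le_mul_of_nonneg_right (hcard T hT) (prod_nonneg fun p hp ↦ hf p (hT hp))
    _ = K * ∏ p ∈ T, f p / g p := by rw [prod_div_distrib]; ring

lemma sum_exp_sum_filter_le {u : κ → ℝ} (hu : ∀ p ∈ P, u p ∈ Set.Icc 0 1)
    (hg : ∀ p ∈ P, 0 < g p)
    (hcard : ∀ T ⊆ P, (#{k ∈ s | ∀ p ∈ T, r k p} : ℝ) ≤ K / ∏ p ∈ T, g p) :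
    ∑ k ∈ s, exp (∑ p ∈ P with r k p, u p) ≤ K * exp (2 * ∑ p ∈ P, u p / g p) := by
  have hK : 0 ≤ K := by simpa using (Nat.cast_nonneg _).trans (hcard ∅ (empty_subset _))
  have hf : ∀ p ∈ P, 0 ≤ exp (u p) - 1 := fun p hp ↦ sub_nonneg.2 (one_le_exp (hu p hp).1)
  have hf_le : ∀ p ∈ P, exp (u p) - 1 ≤ 2 * u p := by
    intro p hp
    obtain ⟨hu0, hu1⟩ := hu p hp
    have habs : |u p| = u p := abs_of_nonneg hu0
    calc exp (u p) - 1 ≤ 2 * |u p| := le_of_abs_le (abs_exp_sub_one_le (habs.trans_le hu1))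
      _ = 2 * u p := by rw [habs]
  calc ∑ k ∈ s, exp (∑ p ∈ P with r k p, u p)
      = ∑ k ∈ s, ∏ p ∈ P with r k p, (1 + (exp (u p) - 1)) := by
        simp only [exp_sum, add_sub_cancel]
    _ ≤ K * ∏ p ∈ P, (1 + (exp (u p) - 1) / g p) := sum_prod_filter_one_add_le hf hcard
    _ ≤ K * exp (∑ p ∈ P, (exp (u p) - 1) / g p) := by
        rw [exp_sum]
        gcongr with p
        · exact fun p hp ↦ add_nonneg zero_le_one (div_nonneg (hf p hp) (hg p hp).le)
        · rw [add_comm]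
          exact add_one_le_exp _
    _ ≤ K * exp (2 * ∑ p ∈ P, u p / g p) := by
        rw [mul_sum]
        gcongr with p hp
        rw [← mul_div_assoc]
        exact div_le_div_of_nonneg_right (hf_le p hp) (hg p hp).le

lemma card_filter_lt_sum_filter_le {w : κ → ℝ} {L z : ℝ} (hz : 0 ≤ z)
    (hw : ∀ p ∈ P, z * w p ∈ Set.Icc 0 1) (hg : ∀ p ∈ P, 0 < g p)
    (hL : ∑ p ∈ P, w p / g p ≤ L)
    (hcard : ∀ T ⊆ P, (#{k ∈ s | ∀ p ∈ T, r k p} : ℝ) ≤ K / ∏ p ∈ T, g p) :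
    (#{k ∈ s | 2 * L + 1 < ∑ p ∈ P with r k p, w p} : ℝ) ≤ K * exp (-z) := by
  have hK : 0 ≤ K := by simpa using (Nat.cast_nonneg _).trans (hcard ∅ (empty_subset _))
  refine le_of_mul_le_mul_right ?_ (exp_pos (z * (2 * L + 1)))
  calc #{k ∈ s | 2 * L + 1 < ∑ p ∈ P with r k p, w p} * exp (z * (2 * L + 1))
      ≤ ∑ k ∈ s with 2 * L + 1 < ∑ p ∈ P with r k p, w p,
          exp (∑ p ∈ P with r k p, z * w p) := by
        rw [← nsmul_eq_mul]
        refine card_nsmul_le_sum _ _ _ fun k hk ↦ ?_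
        rw [← mul_sum]
        gcongr
        exact (mem_filter.1 hk).2.le
    _ ≤ ∑ k ∈ s, exp (∑ p ∈ P with r k p, z * w p) :=
        sum_le_sum_of_subset_of_nonneg (filter_subset _ _) fun k _ _ ↦ (exp_pos _).le
    _ ≤ K * exp (2 * ∑ p ∈ P, z * w p / g p) := sum_exp_sum_filter_le hw hg hcard
    _ = K * exp (z * (2 * ∑ p ∈ P, w p / g p)) := by
        simp only [mul_div_assoc, ← mul_sum]
        ring_nf
    _ ≤ K * exp (z * (2 * L)) := by gcongr
    _ = K * exp (-z) * exp (z * (2 * L + 1)) := by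
        rw [mul_assoc, ← exp_add]
        ring_nf

end ExponentialMoment

section PrimeProducts

variable {T : Finset ℕ}

lemma squarefree_prod_primes (hT : ∀ p ∈ T, p.Prime) : Squarefree (∏ p ∈ T, p) :=
  squarefree_prod_of_pairwise_isCoprime
    (fun p hp q hq hpq ↦
      Nat.coprime_iff_isRelPrime.1 ((Nat.coprime_primes (hT p hp) (hT q hq)).2 hpq))
    fun p hp ↦ (hT p hp).prime.squarefree

lemma prod_primes_dvd_iff (hT : ∀ p ∈ T, p.Prime) {n : ℕ} :
    ∏ p ∈ T, p ∣ n ↔ ∀ p ∈ T, p ∣ n :=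
  ⟨fun h _ hp ↦ (dvd_prod_of_mem _ hp).trans h, prod_primes_dvd n fun p hp ↦ (hT p hp).prime⟩

lemma map_prod_primes {g : ℕ → ℝ} (hg_one : g 1 = 1)
    (hg_mul : ∀ m n : ℕ, 0 < m → 0 < n → Nat.Coprime m n → g (m * n) = g m * g n)
    (hT : ∀ p ∈ T, p.Prime) : g (∏ p ∈ T, p) = ∏ p ∈ T, g p := by
  induction T using Finset.induction_on with
  | empty => simpa using hg_one
  | insert q T hq ih =>
    obtain ⟨hq_prime, hT⟩ := (forall_mem_insert _ _ _).1 hT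
    have hcop : q.Coprime (∏ p ∈ T, p) := Nat.Coprime.prod_right fun p hp ↦
      (Nat.coprime_primes hq_prime (hT p hp)).2 (ne_of_mem_of_not_mem hp hq).symm
    rw [prod_insert hq, prod_insert hq,
      hg_mul _ _ hq_prime.pos (prod_pos fun p hp ↦ (hT p hp).pos) hcop, ih hT]

lemma card_filter_forall_dvd_le {ι : Type*} {s : Finset ι} {a : ι → ℕ} {g : ℕ → ℝ} {K y : ℝ}
    (hg_one : g 1 = 1)
    (hg_mul : ∀ m n : ℕ, 0 < m → 0 < n → Nat.Coprime m n → g (m * n) = g m * g n)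
    (hω : ∀ n : ℕ, Squarefree n → (∀ p : ℕ, p.Prime → p ∣ n → (p : ℝ) ≤ y) →
      (#{k ∈ s | n ∣ a k} : ℝ) ≤ K / g n)
    (hT : ∀ p ∈ T, p.Prime) (hTy : ∀ p ∈ T, (p : ℝ) ≤ y) :
    (#{k ∈ s | ∀ p ∈ T, p ∣ a k} : ℝ) ≤ K / ∏ p ∈ T, g p := by
  simp_rw [← map_prod_primes hg_one hg_mul hT, ← prod_primes_dvd_iff hT]
  refine hω _ (squarefree_prod_primes hT) fun q hq hqT ↦ ?_
  obtain ⟨p, hp, hqp⟩ := (hq.prime.dvd_finsetProd_iff _).1 hqT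
  exact (Nat.prime_dvd_prime_iff_eq hq (hT p hp)).1 hqp ▸ hTy p hp

end PrimeProducts

section Tail

variable {ι : Type*} {s : Finset ι} {a : ι → ℕ} {g : ℕ → ℝ} {K L y z : ℝ}

lemma card_lt_sum_inv_le (hz : 0 ≤ z) (hg_one : g 1 = 1)
    (hg_mul : ∀ m n : ℕ, 0 < m → 0 < n → Nat.Coprime m n → g (m * n) = g m * g n)
    (hg_pos : ∀ p : ℕ, p.Prime → 0 < g p)
    (hL : ∑ p ∈ primesLE ⌊y⌋₊, 1 / ((p : ℝ) * g p) ≤ L)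
    (hω : ∀ n : ℕ, Squarefree n → (∀ p : ℕ, p.Prime → p ∣ n → (p : ℝ) ≤ y) →
      (#{k ∈ s | n ∣ a k} : ℝ) ≤ K / g n) :
    (#{k ∈ s | 2 * L + 1 <
      ∑ p ∈ primesLE ⌊y⌋₊ \ primesLE ⌊z⌋₊ with p ∣ a k, (p : ℝ)⁻¹} : ℝ) ≤ K * exp (-z) := by
  have hP : ∀ p ∈ primesLE ⌊y⌋₊ \ primesLE ⌊z⌋₊, p.Prime ∧ (p : ℝ) ≤ y ∧ z < p := by
    intro p hp
    obtain ⟨hpy, hpz⟩ := mem_sdiff.1 hp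
    obtain ⟨hp_le, hp_prime⟩ := mem_primesLE.1 hpy
    exact ⟨hp_prime, (Nat.le_floor_iff' hp_prime.ne_zero).1 hp_le,
      lt_of_prime_of_notMem_primesLE_floor hp_prime hpz⟩
  refine card_filter_lt_sum_filter_le (w := fun p : ℕ ↦ (p : ℝ)⁻¹) hz (fun p hp ↦ ?_)
    (fun p hp ↦ hg_pos p (hP p hp).1) ?_ fun T hT ↦
      card_filter_forall_dvd_le hg_one hg_mul hω (fun p hp ↦ (hP p (hT hp)).1)
        fun p hp ↦ (hP p (hT hp)).2.1
  · have hzp : z < p := (hP p hp).2.2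
    exact ⟨by positivity, (mul_inv_le_iff₀ (hz.trans_lt hzp)).2 (by linarith)⟩
  · calc ∑ p ∈ primesLE ⌊y⌋₊ \ primesLE ⌊z⌋₊, (p : ℝ)⁻¹ / g p
        = ∑ p ∈ primesLE ⌊y⌋₊ \ primesLE ⌊z⌋₊, 1 / ((p : ℝ) * g p) :=
          sum_congr rfl fun p _ ↦ by rw [← div_div, one_div]
      _ ≤ ∑ p ∈ primesLE ⌊y⌋₊, 1 / ((p : ℝ) * g p) :=
          sum_le_sum_of_subset_of_nonneg sdiff_subset fun p hp _ ↦
            one_div_nonneg.2 (mul_nonneg p.cast_nonneg (hg_pos p (prime_of_mem_primesLE hp)).le)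
      _ ≤ L := hL

lemma card_lt_cast_div_totient_le {κ : ℝ} (hκ : 0 ≤ κ) (hy : 2 ≤ y) (hz : 2 ≤ z)
    (ha : ∀ k ∈ s, a k ≠ 0 ∧ log (a k) ≤ y ^ κ) (hg_one : g 1 = 1)
    (hg_mul : ∀ m n : ℕ, 0 < m → 0 < n → Nat.Coprime m n → g (m * n) = g m * g n)
    (hg_pos : ∀ p : ℕ, p.Prime → 0 < g p)
    (hL : ∑ p ∈ primesLE ⌊y⌋₊, 1 / ((p : ℝ) * g p) ≤ L)
    (hω : ∀ n : ℕ, Squarefree n → (∀ p : ℕ, p.Prime → p ∣ n → (p : ℝ) ≤ y) →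
      (#{k ∈ s | n ∣ a k} : ℝ) ≤ K / g n) :
    (#{k ∈ s | 3 * exp (4 * κ + 10) * log z * exp (2 * (2 * L + 1)) <
      (a k : ℝ) / (a k).totient} : ℝ) ≤ K * exp (-z) := by
  refine le_trans ?_ (card_lt_sum_inv_le (by linarith) hg_one hg_mul hg_pos hL hω)
  refine mod_cast card_le_card (monotone_filter_right s fun k hk hratio ↦ ?_)
  have hlogz : 0 < log z := log_pos (by linarith)
  have hexp := hratio.trans_le (cast_div_totient_le_of_log_le_rpow (ha k hk).1 hy hz hκ (ha k hk).2)
  rw [mul_lt_mul_iff_right₀ (by positivity), exp_lt_exp] at hexp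
  exact lt_of_mul_lt_mul_left hexp zero_le_two

end Tail

theorem card_totient_ratio_gt_le_general (γ α L : ℝ) (hα : 0 < α) :
    ∃ c₁ c₂ : ℝ, 0 < c₁ ∧ 0 < c₂ ∧
      ∀ {ι : Type*} (s : Finset ι) (a : ι → ℕ) (g : ℕ → ℝ) (y : ℝ), 2 ≤ y →
      (∀ k ∈ s, a k ≠ 0 ∧ log (a k) ^ α ≤ y) → g 1 = 1 →
      (∀ m n : ℕ, 0 < m → 0 < n → Nat.Coprime m n → g (m * n) = g m * g n) →
      (∀ p : ℕ, p.Prime → 0 < g p) →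
      ∑ p ∈ primesLE ⌊y⌋₊, 1 / ((p : ℝ) * g p) ≤ L →
      (∀ n : ℕ, Squarefree n → (∀ p : ℕ, p.Prime → p ∣ n → (p : ℝ) ≤ y) →
        (#{k ∈ s | n ∣ a k} : ℝ) ≤ γ * #s / g n) →
      ∀ t : ℝ, (#{k ∈ s | t < (a k : ℝ) / (a k).totient} : ℝ) ≤
        c₁ * exp (-exp (c₂ * t)) * #s := by
  set c := 3 * exp (4 * α⁻¹ + 10) * exp (2 * (2 * L + 1)) with hc
  refine ⟨max γ (exp 2), c⁻¹, by positivity, by positivity, ?_⟩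
  intro ι s a g y hy ha hg_one hg_mul hg_pos hL hω t
  set z := exp (c⁻¹ * t) with hz
  obtain hz2 | hz2 := lt_or_ge z 2
  · calc (#{k ∈ s | t < (a k : ℝ) / (a k).totient} : ℝ) ≤ 1 * #s := by
          rw [one_mul]; gcongr; exact filter_subset _ _
      _ ≤ exp 2 * exp (-z) * #s := by
          gcongr
          rw [← exp_add, one_le_exp_iff]
          linarith
      _ ≤ max γ (exp 2) * exp (-z) * #s := by gcongr; exact le_max_right _ _
  · have ha' : ∀ k ∈ s, a k ≠ 0 ∧ log (a k) ≤ y ^ α⁻¹ := fun k hk ↦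
      ⟨(ha k hk).1, (le_rpow_inv_iff_of_pos (log_natCast_nonneg _) (by linarith) hα).2 (ha k hk).2⟩
    have ht : 3 * exp (4 * α⁻¹ + 10) * log z * exp (2 * (2 * L + 1)) = t := by
      rw [hz, log_exp, hc]
      field_simp
    have htail := card_lt_cast_div_totient_le (inv_nonneg.2 hα.le) hy hz2 ha' hg_one hg_mul
      hg_pos hL hω
    rw [ht] at htail
    calc (#{k ∈ s | t < (a k : ℝ) / (a k).totient} : ℝ) ≤ γ * #s * exp (-z) := htail
      _ = γ * exp (-z) * #s := by ring
      _ ≤ max γ (exp 2) * exp (-z) * #s := by gcongr; exact le_max_left _ _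

lemma sum_le_tsum_subtype {ι : Type*} {q : ι → Prop} {s : Finset ι} (hs : ∀ i ∈ s, q i) {f : ι → ℝ}
    (hf : ∀ i, q i → 0 ≤ f i) (hsum : Summable fun i : Subtype q ↦ f i) :
    ∑ i ∈ s, f i ≤ ∑' i : Subtype q, f i := by
  classical
  rw [← sum_subtype_of_mem f hs]
  exact hsum.sum_le_tsum _ fun i _ ↦ hf i i.2

end

/-- Theorem (Radomskii, Theorem 2, inequality (2)): under the hypotheses of Theorem 1 with
`K = γN`, `g(p) ≥ c₀`, and `L = ∑_p 1/(p g(p)) < ∞`, there are constants `c₁, c₂` depending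
only on `γ`, `L`, `c₀`, `α` such that `#{n ≤ N : a_n/φ(a_n) > t} ≤ c₁ exp(-exp(c₂ t)) N`. -/
theorem card_totient_ratio_gt_le (γ c₀ α L : ℝ) (hγ : 0 < γ) (hc₀ : 0 < c₀)
    (hα : α ∈ Set.Ioc (0 : ℝ) 1) :
    ∃ c₁ c₂ : ℝ, 0 < c₁ ∧ 0 < c₂ ∧
      ∀ (N M : ℕ), 0 < N → 0 < M →
      ∀ a : ℕ → ℕ, (∀ n, 1 ≤ n → n ≤ N → 0 < a n ∧ a n ≤ M) →
      ∀ g : ℕ → ℝ, g 1 = 1 →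
      (∀ m n : ℕ, 0 < m → 0 < n → Nat.Coprime m n → g (m * n) = g m * g n) →
      (∀ p : ℕ, p.Prime → c₀ ≤ g p) →
      (Summable fun p : Nat.Primes => 1 / (((p : ℕ) : ℝ) * g (p : ℕ))) →
      (∑' p : Nat.Primes, 1 / (((p : ℕ) : ℝ) * g (p : ℕ))) = L →
      ∀ y : ℝ, y = max (Real.log M ^ α) 2 →
      (∀ n : ℕ, Squarefree n → (∀ p : ℕ, p.Prime → p ∣ n → (p : ℝ) ≤ y) →
        (((Finset.Icc 1 N).filter fun k => n ∣ a k).card : ℝ) ≤ γ * N / g n) →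
      ∀ t : ℝ, 0 < t →
      (((Finset.Icc 1 N).filter fun n => t < (a n : ℝ) / (Nat.totient (a n) : ℝ)).card : ℝ) ≤
        c₁ * Real.exp (-Real.exp (c₂ * t)) * N := by
  obtain ⟨c₁, c₂, hc₁, hc₂, hcard⟩ := card_totient_ratio_gt_le_general γ α L hα.1
  refine ⟨c₁, c₂, hc₁, hc₂, ?_⟩
  intro N M _ _ a ha g hg_one hg_mul hg hsum hL y hy hω t _
  have hg_pos : ∀ p : ℕ, p.Prime → 0 < g p := fun p hp ↦ hc₀.trans_le (hg p hp)
  have hay : ∀ n ∈ Finset.Icc 1 N, a n ≠ 0 ∧ Real.log (a n) ^ α ≤ y := by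
    intro n hn
    rw [Finset.mem_Icc] at hn
    obtain ⟨ha_pos, ha_le⟩ := ha n hn.1 hn.2
    refine ⟨ha_pos.ne', le_trans ?_ (hy ▸ le_max_left _ _)⟩
    have hα0 := hα.1
    gcongr
  have hsum_le : ∑ p ∈ Nat.primesLE ⌊y⌋₊, 1 / ((p : ℝ) * g p) ≤ L := hL ▸
    sum_le_tsum_subtype (fun _ hp ↦ Nat.prime_of_mem_primesLE hp)
      (fun p hp ↦ one_div_nonneg.2 (mul_nonneg p.cast_nonneg (hg_pos p hp).le)) hsum
  simpa using hcard (Finset.Icc 1 N) a g y (hy ▸ le_max_right _ _) hay hg_one hg_mul hg_pos hsum_le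
    (by simpa using hω) t
end

section
/- There exists an absolute constant c > 0 such that for every α ∈ (0,1] and every positive integer n, n/φ(n) ≤ (c/α) · Π_{p | n, p ≤ (ln n)^α} (1 + 1/p), where the product runs over primes p dividing n with p ≤ (ln n)^α. -/
open scoped Classical

/-!
Expanding `n / φ n = ∏_{p ∣ n} (1 - 1/p)⁻¹`, which is at most `2 ∏_{p ∣ n} (1 + 1/p)` because
`∏ (1 - 1/k²) ≥ 1/2`, we split the primes at `(log n)^α` and `log n`. The integer `n` has at most
`log n` prime factors above `log n`, so these contribute a bounded factor. The primes in between
contribute at most a constant times `log (log n) / log ((log n)^α) = 1/α`, by Mertens' estimate that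
`∏_{p ≤ x} (1 + 1/p)` has order `log x`. The lower half of that estimate compares an Euler product
with the harmonic sum. For the upper half, `1/p` is replaced by `p^(-1 - 1/log x)`, whose Euler
product is bounded by `ζ(1 + 1/log x) ≤ 1 + log x`; the replacement costs a bounded factor because
`∑_{p ≤ x} log p / p ≤ log x + O(1)`.
-/

section

open Finset Real

lemma one_le_prod_one_add_one_div (S : Finset ℕ) : 1 ≤ ∏ k ∈ S, (1 + 1 / (k : ℝ)) :=
  one_le_prod fun k _ ↦ le_add_of_nonneg_right (by positivity)

lemma prod_one_add_one_div_le_of_subset {S T : Finset ℕ} (hST : S ⊆ T) :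
    ∏ k ∈ S, (1 + 1 / (k : ℝ)) ≤ ∏ k ∈ T, (1 + 1 / (k : ℝ)) :=
  prod_le_prod_of_subset_of_one_le hST (fun _ _ ↦ by positivity)
    fun k _ _ ↦ le_add_of_nonneg_right (by positivity)

lemma prod_union_one_add_one_div_le (S T : Finset ℕ) :
    ∏ k ∈ S ∪ T, (1 + 1 / (k : ℝ)) ≤
      (∏ k ∈ S, (1 + 1 / (k : ℝ))) * ∏ k ∈ T, (1 + 1 / (k : ℝ)) := by
  rw [← prod_union_inter]
  exact le_mul_of_one_le_right (by positivity) (one_le_prod_one_add_one_div _)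

lemma prod_one_add_one_div_le_exp_card_div {S : Finset ℕ} {x : ℝ} (hx : 0 < x)
    (hS : ∀ k ∈ S, x ≤ k) : ∏ k ∈ S, (1 + 1 / (k : ℝ)) ≤ exp (#S / x) := by
  refine (prod_one_add_le_exp_sum S fun k ↦ by positivity).trans (exp_le_exp.2 ?_)
  calc ∑ k ∈ S, 1 / (k : ℝ) ≤ #S • (1 / x) :=
        sum_le_card_nsmul _ _ _ fun k hk ↦ one_div_le_one_div_of_le hx (hS k hk)
    _ = #S / x := by rw [nsmul_eq_mul, mul_one_div]

lemma prod_Icc_one_sub_one_div_sq (N : ℕ) :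
    ∏ k ∈ Icc 2 (N + 1), (1 - 1 / (k : ℝ) ^ 2) = ((N : ℝ) + 2) / (2 * (N + 1)) := by
  induction N with
  | zero => norm_num
  | succ N ih =>
    rw [prod_Icc_succ_top (by lia), ih]
    push_cast
    field_simp
    ring

lemma one_half_le_prod_one_sub_one_div_sq {S : Finset ℕ} (hS : ∀ k ∈ S, 2 ≤ k) :
    1 / 2 ≤ ∏ k ∈ S, (1 - 1 / (k : ℝ) ^ 2) := by
  have hsub : S ⊆ Icc 2 (S.sup id + 1) := fun k hk ↦
    mem_Icc.2 ⟨hS k hk, (le_sup (f := id) hk).trans (Nat.le_succ _)⟩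
  calc (1 / 2 : ℝ) ≤ ((S.sup id : ℕ) + 2) / (2 * ((S.sup id : ℕ) + 1)) := by
        rw [div_le_div_iff₀ (by norm_num) (by positivity)]
        linarith
    _ = ∏ k ∈ Icc 2 (S.sup id + 1), (1 - 1 / (k : ℝ) ^ 2) := (prod_Icc_one_sub_one_div_sq _).symm
    _ ≤ ∏ k ∈ S, (1 - 1 / (k : ℝ) ^ 2) := by
        refine prod_le_prod_of_subset_of_le_one hsub (fun k hk ↦ ?_) fun k _ _ ↦ by simp
        have hk : (1 : ℝ) ≤ k := by exact_mod_cast one_le_two.trans (mem_Icc.1 hk).1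
        exact sub_nonneg.2 (div_le_one_of_le₀ (one_le_pow₀ hk) (by positivity))

lemma prod_inv_one_sub_inv_le {S : Finset ℕ} (hS : ∀ k ∈ S, 2 ≤ k) :
    ∏ k ∈ S, (1 - (k : ℝ)⁻¹)⁻¹ ≤ 2 * ∏ k ∈ S, (1 + 1 / (k : ℝ)) := by
  have hlt (k : ℕ) (hk : k ∈ S) : (k : ℝ)⁻¹ < 1 :=
    inv_lt_one_of_one_lt₀ (by exact_mod_cast hS k hk)
  have hfactor : (∏ k ∈ S, (1 - (k : ℝ)⁻¹)⁻¹) * ∏ k ∈ S, (1 - 1 / (k : ℝ) ^ 2) =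
      ∏ k ∈ S, (1 + 1 / (k : ℝ)) := by
    rw [← prod_mul_distrib]
    refine prod_congr rfl fun k hk ↦ ?_
    rw [inv_mul_eq_iff_eq_mul₀ (sub_pos.2 (hlt k hk)).ne']
    ring
  have hnonneg : 0 ≤ ∏ k ∈ S, (1 - (k : ℝ)⁻¹)⁻¹ :=
    prod_nonneg fun k hk ↦ inv_nonneg.2 (sub_pos.2 (hlt k hk)).le
  linarith [mul_le_mul_of_nonneg_left (one_half_le_prod_one_sub_one_div_sq hS) hnonneg]

lemma hasSum_smoothNumbers_rpow {r : ℝ} (hr : r < 0) (N : ℕ) :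
    HasSum (fun m : N.smoothNumbers ↦ ((m : ℕ) : ℝ) ^ r)
      (∏ p ∈ N.primesBelow, (1 - (p : ℝ) ^ r)⁻¹) := by
  let f : ℕ →* ℝ := (NNReal.toRealHom : NNReal →* ℝ).comp <|
    (NNReal.rpowMonoidHom r).comp (Nat.castRingHom NNReal)
  have hf {p : ℕ} (hp : p.Prime) : ‖f p‖ < 1 := by
    have hfp : f p = (p : ℝ) ^ r := rfl
    rw [hfp, Real.norm_of_nonneg (by positivity)]
    exact rpow_lt_one_of_one_lt_of_neg (by exact_mod_cast hp.one_lt) hr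
  exact (EulerProduct.summable_and_hasSum_smoothNumbers_prod_primesBelow_geometric hf N).2

lemma log_le_two_mul_prod_primesLE {x : ℝ} (hx : 0 ≤ x) :
    log x ≤ 2 * ∏ p ∈ Nat.primesLE ⌊x⌋₊, (1 + 1 / (p : ℝ)) := by
  have hsmooth (m : ℕ) (hm : m ∈ Icc 1 ⌊x⌋₊) : m ∈ (⌊x⌋₊ + 1).smoothNumbers :=
    Nat.mem_smoothNumbers_of_lt (mem_Icc.1 hm).1 (Nat.lt_succ_of_le (mem_Icc.1 hm).2)
  have hEuler := hasSum_smoothNumbers_rpow neg_one_lt_zero (⌊x⌋₊ + 1)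
  simp only [rpow_neg_one] at hEuler
  calc log x ≤ harmonic ⌊x⌋₊ := log_le_harmonic_floor x hx
    _ = ∑ m ∈ Icc 1 ⌊x⌋₊, (m : ℝ)⁻¹ := by rw [harmonic_eq_sum_Icc]; push_cast; rfl
    _ = ∑ m ∈ (Icc 1 ⌊x⌋₊).subtype (· ∈ (⌊x⌋₊ + 1).smoothNumbers), ((m : ℕ) : ℝ)⁻¹ :=
        (sum_subtype_of_mem (fun m : ℕ ↦ (m : ℝ)⁻¹) hsmooth).symm
    _ ≤ ∏ p ∈ Nat.primesLE ⌊x⌋₊, (1 - (p : ℝ)⁻¹)⁻¹ :=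
        sum_le_hasSum _ (fun _ _ ↦ by positivity) hEuler
    _ ≤ 2 * ∏ p ∈ Nat.primesLE ⌊x⌋₊, (1 + 1 / (p : ℝ)) :=
        prod_inv_one_sub_inv_le fun _ ↦ Nat.two_le_of_mem_primesLE

lemma tsum_nat_rpow_neg_le {σ : ℝ} (hσ : 1 < σ) :
    ∑' n : ℕ, (n : ℝ) ^ (-σ) ≤ 1 + 1 / (σ - 1) := by
  have hsum : Summable fun n : ℕ ↦ (n : ℝ) ^ (-σ) := summable_nat_rpow.2 (neg_lt_neg hσ)
  have hzeta : ∑' n : ℕ, (n : ℝ) ^ (-σ) = ∑' n : ℕ, 1 / (n + 1 : ℝ) ^ σ := by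
    rw [hsum.tsum_eq_zero_add, Nat.cast_zero, zero_rpow (by linarith), zero_add]
    refine tsum_congr fun n ↦ ?_
    rw [rpow_neg (by positivity), one_div, Nat.cast_succ]
  have hterm : 0 ≤ σ * ZetaAsymptotics.termTSum σ :=
    mul_nonneg (by linarith) (tsum_nonneg fun n ↦ ZetaAsymptotics.term_nonneg (n + 1) σ)
  linarith [ZetaAsymptotics.zeta_limit_aux1 hσ]

lemma prod_primesBelow_one_add_rpow_neg_le {σ : ℝ} (hσ : 1 < σ) (N : ℕ) :
    ∏ p ∈ N.primesBelow, (1 + (p : ℝ) ^ (-σ)) ≤ 1 + 1 / (σ - 1) := by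
  have hneg : -σ < 0 := by linarith
  have hsum : Summable fun n : ℕ ↦ (n : ℝ) ^ (-σ) := summable_nat_rpow.2 (neg_lt_neg hσ)
  calc ∏ p ∈ N.primesBelow, (1 + (p : ℝ) ^ (-σ))
      ≤ ∏ p ∈ N.primesBelow, (1 - (p : ℝ) ^ (-σ))⁻¹ := by
        refine prod_le_prod (fun p _ ↦ by positivity) fun p hp ↦ ?_
        have hlt : (p : ℝ) ^ (-σ) < 1 := rpow_lt_one_of_one_lt_of_neg
          (by exact_mod_cast (Nat.prime_of_mem_primesBelow hp).one_lt) hneg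
        rw [← one_div, le_div_iff₀ (sub_pos.2 hlt)]
        linarith [sq_nonneg ((p : ℝ) ^ (-σ))]
    _ = ∑' m : N.smoothNumbers, ((m : ℕ) : ℝ) ^ (-σ) :=
        (hasSum_smoothNumbers_rpow hneg N).tsum_eq.symm
    _ ≤ ∑' n : ℕ, (n : ℝ) ^ (-σ) := hsum.tsum_subtype_le _ _ fun n ↦ by positivity
    _ ≤ 1 + 1 / (σ - 1) := tsum_nat_rpow_neg_le hσ

lemma div_le_factorization_factorial {p : ℕ} (hp : p.Prime) (N : ℕ) :
    N / p ≤ (N.factorial).factorization p := by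
  have hle : (p * (N / p)).factorial.factorization p ≤ N.factorial.factorization p :=
    (Nat.factorization_le_iff_dvd (Nat.factorial_ne_zero _) (Nat.factorial_ne_zero _)).2
      (Nat.factorial_dvd_factorial (Nat.mul_div_le N p)) p
  rw [Nat.factorization_factorial_mul hp] at hle
  exact le_of_add_le_right hle

lemma sum_primesLE_div_mul_log_le_log_factorial (N : ℕ) :
    ∑ p ∈ Nat.primesLE N, ((N / p : ℕ) : ℝ) * log p ≤ log N.factorial := by
  have hsub : N.factorial.primeFactors ⊆ Nat.primesLE N := fun p hp ↦
    have hprime := Nat.prime_of_mem_primeFactors hp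
    Nat.mem_primesLE.2 ⟨hprime.dvd_factorial.1 (Nat.dvd_of_mem_primeFactors hp), hprime⟩
  rw [log_nat_eq_sum_factorization,
    Finsupp.sum_of_support_subset _ hsub _ fun _ _ ↦ by rw [Nat.cast_zero, zero_mul]]
  gcongr with p hp
  exact div_le_factorization_factorial (Nat.prime_of_mem_primesLE hp) N

lemma sum_primesLE_log_div_le (N : ℕ) :
    ∑ p ∈ Nat.primesLE N, log p / p ≤ log N + log 4 := by
  rcases N.eq_zero_or_pos with rfl | hN
  · simpa using log_nonneg (by norm_num : (1 : ℝ) ≤ 4)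
  have hfactorial : log N.factorial ≤ N * log N := by
    rw [← log_pow]
    exact log_le_log (by positivity) (by exact_mod_cast N.factorial_le_pow)
  have htheta : ∑ p ∈ Nat.primesLE N, log p ≤ log 4 * N := by
    rw [← Chebyshev.theta_eq_sum_primesLE_log]
    exact Chebyshev.theta_le_log4_mul_x (Nat.cast_nonneg N)
  have hfloor : N * ∑ p ∈ Nat.primesLE N, log p / p ≤
      ∑ p ∈ Nat.primesLE N, ((N / p : ℕ) : ℝ) * log p + ∑ p ∈ Nat.primesLE N, log p := by
    rw [mul_sum, ← sum_add_distrib]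
    refine sum_le_sum fun p _ ↦ ?_
    calc (N : ℝ) * (log p / p) = N / p * log p := by ring
      _ ≤ ((N / p : ℕ) + 1) * log p := by
          gcongr
          rw [← Nat.floor_div_eq_div (K := ℝ)]
          exact (Nat.lt_floor_add_one _).le
      _ = (N / p : ℕ) * log p + log p := by ring
  refine le_of_mul_le_mul_left ?_ (Nat.cast_pos.2 hN : (0 : ℝ) < N)
  linarith [sum_primesLE_div_mul_log_le_log_factorial N]

lemma one_add_one_div_le_mul_exp {t s : ℝ} (ht : 1 ≤ t) (hs : 0 ≤ s) :
    1 + 1 / t ≤ (1 + t ^ (-(1 + s))) * exp (s * (log t / t)) := by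
  have ht0 : 0 < t := by linarith
  have hlog : 0 ≤ log t := log_nonneg ht
  have hpow : t ^ (-(1 + s)) = exp (-(s * log t)) / t := by
    rw [neg_add', sub_eq_add_neg, add_comm, rpow_add ht0, rpow_neg_one, rpow_def_of_pos ht0]
    ring_nf
  have hdiff : 1 / t ≤ t ^ (-(1 + s)) + s * (log t / t) := by
    rw [hpow, ← mul_div_assoc, ← add_div]
    gcongr
    linarith [add_one_le_exp (-(s * log t))]
  have hnonneg : 0 ≤ t ^ (-(1 + s)) * (s * (log t / t)) := by positivity
  calc 1 + 1 / t ≤ (1 + t ^ (-(1 + s))) * (s * (log t / t) + 1) := by linarith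
    _ ≤ (1 + t ^ (-(1 + s))) * exp (s * (log t / t)) := by
        gcongr
        exact add_one_le_exp _

lemma prod_primesLE_le_mul_log {x : ℝ} (hx : 2 ≤ x) :
    ∏ p ∈ Nat.primesLE ⌊x⌋₊, (1 + 1 / (p : ℝ)) ≤ 3 * exp 3 * log x := by
  have hlog2 : 1 / 2 ≤ log 2 := by linarith [log_two_gt_d9]
  have hlogx : log 2 ≤ log x := log_le_log two_pos hx
  have hpos : 0 < log x := by linarith
  set s := 1 / log x with hs
  have hs0 : 0 < s := one_div_pos.2 hpos
  have hsum : s * ∑ p ∈ Nat.primesLE ⌊x⌋₊, log p / p ≤ 3 := by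
    have hfloor : log ⌊x⌋₊ ≤ log x :=
      log_le_log (by exact_mod_cast Nat.floor_pos.2 (by linarith)) (Nat.floor_le (by linarith))
    have hlog4 : log 4 = 2 * log 2 := by
      rw [← log_rpow two_pos]
      norm_num
    rw [hs, one_div_mul_eq_div, div_le_iff₀ hpos]
    linarith [sum_primesLE_log_div_le ⌊x⌋₊]
  have hzeta : ∏ p ∈ Nat.primesLE ⌊x⌋₊, (1 + (p : ℝ) ^ (-(1 + s))) ≤ 3 * log x := by
    have h := prod_primesBelow_one_add_rpow_neg_le (by linarith : 1 < 1 + s) (⌊x⌋₊ + 1)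
    rw [add_sub_cancel_left, hs, one_div_one_div] at h
    exact h.trans (by linarith)
  calc ∏ p ∈ Nat.primesLE ⌊x⌋₊, (1 + 1 / (p : ℝ))
      ≤ ∏ p ∈ Nat.primesLE ⌊x⌋₊, ((1 + (p : ℝ) ^ (-(1 + s))) * exp (s * (log p / p))) :=
        prod_le_prod (fun p _ ↦ by positivity) fun p hp ↦ one_add_one_div_le_mul_exp
          (by exact_mod_cast (Nat.one_lt_of_mem_primesLE hp).le) hs0.le
    _ = (∏ p ∈ Nat.primesLE ⌊x⌋₊, (1 + (p : ℝ) ^ (-(1 + s)))) *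
          exp (s * ∑ p ∈ Nat.primesLE ⌊x⌋₊, log p / p) := by
        rw [prod_mul_distrib, ← exp_sum, ← mul_sum]
    _ ≤ 3 * log x * exp 3 := by gcongr
    _ = 3 * exp 3 * log x := by ring

lemma prod_primesLE_filter_lt_le {x y : ℝ} (hy : 1 < y) (hyx : y ≤ x) (hx : 2 ≤ x) :
    ∏ p ∈ (Nat.primesLE ⌊x⌋₊).filter (fun p : ℕ ↦ y < p), (1 + 1 / (p : ℝ)) ≤
      6 * exp 3 * (log x / log y) := by
  have hsub : Nat.primesLE ⌊y⌋₊ ⊆ (Nat.primesLE ⌊x⌋₊).filter (fun p : ℕ ↦ ¬ y < p) := fun p hp ↦ by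
    have hpy : (p : ℝ) ≤ y := (Nat.le_floor_iff (by linarith)).1 (Nat.le_of_mem_primesLE hp)
    exact mem_filter.2 ⟨Nat.primesLE_mono (Nat.floor_mono hyx) hp, hpy.not_gt⟩
  have hlower :
      log y / 2 ≤ ∏ p ∈ (Nat.primesLE ⌊x⌋₊).filter (fun p : ℕ ↦ ¬ y < p), (1 + 1 / (p : ℝ)) := by
    linarith [log_le_two_mul_prod_primesLE (by linarith : 0 ≤ y),
      prod_one_add_one_div_le_of_subset hsub]
  have hmul : (∏ p ∈ (Nat.primesLE ⌊x⌋₊).filter (fun p : ℕ ↦ y < p), (1 + 1 / (p : ℝ))) *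
      (log y / 2) ≤ 3 * exp 3 * log x :=
    calc _ ≤ (∏ p ∈ (Nat.primesLE ⌊x⌋₊).filter (fun p : ℕ ↦ y < p), (1 + 1 / (p : ℝ))) *
          ∏ p ∈ (Nat.primesLE ⌊x⌋₊).filter (fun p : ℕ ↦ ¬ y < p), (1 + 1 / (p : ℝ)) := by gcongr
      _ = ∏ p ∈ Nat.primesLE ⌊x⌋₊, (1 + 1 / (p : ℝ)) := prod_filter_mul_prod_filter_not _ _ _
      _ ≤ 3 * exp 3 * log x := prod_primesLE_le_mul_log hx
  rw [← mul_div_assoc, le_div_iff₀ (log_pos hy)]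
  linarith

lemma totient_ratio_le_two_mul_prod_primeFactors (n : ℕ) :
    (n : ℝ) / n.totient ≤ 2 * ∏ p ∈ n.primeFactors, (1 + 1 / (p : ℝ)) := by
  rcases n.eq_zero_or_pos with rfl | hn
  · simp
  have htotient : (n.totient : ℝ) = n * ∏ p ∈ n.primeFactors, (1 - (p : ℝ)⁻¹) := by
    have h := congrArg (Rat.cast : ℚ → ℝ) n.totient_eq_mul_prod_factors
    push_cast at h
    exact h
  calc (n : ℝ) / n.totient = ∏ p ∈ n.primeFactors, (1 - (p : ℝ)⁻¹)⁻¹ := by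
        rw [htotient, prod_inv_distrib, div_mul_cancel_left₀ (Nat.cast_ne_zero.2 hn.ne')]
    _ ≤ 2 * ∏ p ∈ n.primeFactors, (1 + 1 / (p : ℝ)) :=
        prod_inv_one_sub_inv_le fun _ hp ↦ (Nat.prime_of_mem_primeFactors hp).two_le

lemma card_primeFactors_filter_lt_mul_log_le (n : ℕ) {x : ℝ} (hx : 0 < x) :
    #(n.primeFactors.filter (fun p : ℕ ↦ x < p)) * log x ≤ log n := by
  rcases n.eq_zero_or_pos with rfl | hn
  · simp
  rw [← log_pow]
  refine log_le_log (by positivity) ?_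
  calc x ^ #(n.primeFactors.filter (fun p : ℕ ↦ x < p))
      ≤ ∏ p ∈ n.primeFactors.filter (fun p : ℕ ↦ x < p), (p : ℝ) := by
        rw [← prod_const]
        exact prod_le_prod (fun _ _ ↦ hx.le) fun p hp ↦ (mem_filter.1 hp).2.le
    _ ≤ ∏ p ∈ n.primeFactors, (p : ℝ) :=
        prod_le_prod_of_subset_of_one_le (filter_subset _ _) (fun _ _ ↦ by positivity)
          fun p hp _ ↦ by exact_mod_cast (Nat.prime_of_mem_primeFactors hp).one_le
    _ ≤ n := by
        rw [← Nat.cast_prod]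
        exact Nat.cast_le.2 (Nat.le_of_dvd hn n.prod_primeFactors_dvd)

lemma prod_primeFactors_filter_log_lt_le_exp_one {n : ℕ} (hn : exp 1 ≤ log n) :
    ∏ p ∈ n.primeFactors.filter (fun p : ℕ ↦ log n < p), (1 + 1 / (p : ℝ)) ≤ exp 1 := by
  have hpos : 0 < log n := (exp_pos 1).trans_le hn
  have hloglog : 1 ≤ log (log n) := (le_log_iff_exp_le hpos).2 hn
  refine (prod_one_add_one_div_le_exp_card_div hpos fun p hp ↦ (mem_filter.1 hp).2.le).trans
    (exp_le_exp.2 (div_le_one_of_le₀ ?_ hpos.le))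
  exact (le_mul_of_one_le_right (Nat.cast_nonneg _) hloglog).trans
    (card_primeFactors_filter_lt_mul_log_le n hpos)

lemma prod_primeFactors_le_mul_mul (n : ℕ) (x y : ℝ) :
    ∏ p ∈ n.primeFactors, (1 + 1 / (p : ℝ)) ≤
      (∏ p ∈ n.primeFactors.filter (fun p : ℕ ↦ (p : ℝ) ≤ y), (1 + 1 / (p : ℝ))) *
        (∏ p ∈ (Nat.primesLE ⌊x⌋₊).filter (fun p : ℕ ↦ y < p), (1 + 1 / (p : ℝ))) *
        ∏ p ∈ n.primeFactors.filter (fun p : ℕ ↦ x < p), (1 + 1 / (p : ℝ)) := by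
  have hcover : n.primeFactors ⊆
      n.primeFactors.filter (fun p : ℕ ↦ (p : ℝ) ≤ y) ∪
        (Nat.primesLE ⌊x⌋₊).filter (fun p : ℕ ↦ y < p) ∪
        n.primeFactors.filter (fun p : ℕ ↦ x < p) := fun p hp ↦ by
    have hfloor : (p : ℝ) ≤ x → p ∈ Nat.primesLE ⌊x⌋₊ := fun hpx ↦
      Nat.mem_primesLE.2 ⟨Nat.le_floor hpx, Nat.prime_of_mem_primeFactors hp⟩
    simp only [mem_union, mem_filter]
    grind
  calc _ ≤ _ := prod_one_add_one_div_le_of_subset hcover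
    _ ≤ _ := prod_union_one_add_one_div_le _ _
    _ ≤ _ := by
        gcongr
        exact prod_union_one_add_one_div_le _ _

lemma totient_ratio_le_of_exp_one_le_log {n : ℕ} {α : ℝ} (hn : exp 1 ≤ log n)
    (hα : 0 < α) (hα1 : α ≤ 1) :
    (n : ℝ) / n.totient ≤
      12 * exp 4 / α *
        ∏ p ∈ n.primeFactors.filter (fun p : ℕ ↦ (p : ℝ) ≤ log n ^ α), (1 + 1 / (p : ℝ)) := by
  have htwo : 2 ≤ log n := by linarith [add_one_le_exp 1]
  have hloglog : 0 < log (log n) := log_pos (by linarith)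
  set A := ∏ p ∈ n.primeFactors.filter (fun p : ℕ ↦ (p : ℝ) ≤ log n ^ α), (1 + 1 / (p : ℝ))
  set B := ∏ p ∈ (Nat.primesLE ⌊log n⌋₊).filter (fun p : ℕ ↦ log n ^ α < p), (1 + 1 / (p : ℝ))
  set C := ∏ p ∈ n.primeFactors.filter (fun p : ℕ ↦ log n < p), (1 + 1 / (p : ℝ))
  have hmiddle : B ≤ 6 * exp 3 * (1 / α) := by
    have h := prod_primesLE_filter_lt_le (one_lt_rpow (by linarith) hα)
      (rpow_le_self_of_one_le (by linarith) hα1) htwo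
    rwa [log_rpow (by linarith), div_mul_cancel_right₀ hloglog.ne', ← one_div] at h
  calc (n : ℝ) / n.totient ≤ 2 * ∏ p ∈ n.primeFactors, (1 + 1 / (p : ℝ)) :=
        totient_ratio_le_two_mul_prod_primeFactors n
    _ ≤ 2 * (A * B * C) := by
        gcongr
        exact prod_primeFactors_le_mul_mul n _ _
    _ ≤ 2 * (A * (6 * exp 3 * (1 / α)) * exp 1) := by
        gcongr
        exact prod_primeFactors_filter_log_lt_le_exp_one hn
    _ = 12 * exp 4 / α * A := by
        rw [show (4 : ℝ) = 3 + 1 by norm_num, exp_add]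
        ring

lemma totient_ratio_le_exp_four {n : ℕ} (hn : log n < exp 1) : (n : ℝ) / n.totient ≤ exp 4 := by
  rcases n.eq_zero_or_pos with rfl | hpos
  · simpa using (exp_pos 4).le
  calc (n : ℝ) / n.totient ≤ n :=
        div_le_self (Nat.cast_nonneg n) (by exact_mod_cast Nat.totient_pos.2 hpos)
    _ = exp (log n) := (exp_log (Nat.cast_pos.2 hpos)).symm
    _ ≤ exp 4 := exp_le_exp.2 (by linarith [exp_one_lt_d9])

-- `(s : Finset ℝ)` is the image of `s` under the cast, formed by the monadic coercion of `Finset`.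
lemma prod_filter_coe_finset (s : Finset ℕ) (P : ℝ → Prop) [DecidablePred P] (f : ℝ → ℝ) :
    ∏ x ∈ (s : Finset ℝ).filter P, f x = ∏ k ∈ s.filter (fun k : ℕ ↦ P k), f k := by
  have hcoe : (s : Finset ℝ) = s.image (Nat.cast : ℕ → ℝ) := by
    ext
    simp [eq_comm]
  rw [hcoe, filter_image, prod_image Nat.cast_injective.injOn]

end

/-- Lemma (Radomskii, Lemma 3.3 of [Radomskii, Izv.]): there is an absolute constant `c > 0`
such that for every `α ∈ (0,1]` and every positive integer `n`,
`n/φ(n) ≤ (c/α) ∏_{p ∣ n, p ≤ (ln n)^α} (1 + 1/p)`. -/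
theorem totient_ratio_le_prod_small_primes :
    ∃ c : ℝ, 0 < c ∧ ∀ α : ℝ, α ∈ Set.Ioc (0 : ℝ) 1 → ∀ n : ℕ, 0 < n →
      (n : ℝ) / (Nat.totient n : ℝ) ≤
        c / α * ∏ p ∈ n.primeFactors.filter (fun p => (p : ℝ) ≤ Real.log n ^ α),
          (1 + 1 / (p : ℝ)) := by
  refine ⟨12 * Real.exp 4, by positivity, fun α hα n _ ↦ ?_⟩
  rw [prod_filter_coe_finset]
  rcases le_or_gt (Real.exp 1) (Real.log n) with hlarge | hsmall
  · exact totient_ratio_le_of_exp_one_le_log hlarge hα.1 hα.2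
  · have hc : Real.exp 4 ≤ 12 * Real.exp 4 / α := by
      rw [le_div_iff₀ hα.1]
      nlinarith [hα.2, Real.exp_pos 4]
    calc (n : ℝ) / n.totient ≤ Real.exp 4 := totient_ratio_le_exp_four hsmall
      _ ≤ 12 * Real.exp 4 / α := hc
      _ ≤ _ := le_mul_of_one_le_right (Real.exp_pos 4 |>.le.trans hc)
          (one_le_prod_one_add_one_div _)
end
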